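/- arXiv:1506.06688 — 3 statements merged into one kernel-verified Lean document; each statement's English description precedes it below -/
import Mathlib

section
/- Let S be a set of sum-indecomposable permutations that is downward closed among indecomposables (if σ ∈ S, τ is sum-indecomposable, and τ is contained in σ, then τ ∈ S), and suppose there is a constant c such that 1 ≤ |S_n| ≤ c for all n ≥ 1, where S_n is the set of members of S of length n. Then there is a unique real number γ > 1 with Σ_{n≥1} |S_n| γ^{−n} = 1, and the limit lim_{n→∞} |(⊕S)_n|^{1/n} exists and equals this γ, where (⊕S)_n is the set of permutations of length n in the sum closure ⊕S. -/
noncomputable section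

open Filter

/-- The direct sum `σ ⊕ τ` of two permutations: `σ` followed by a shifted copy of `τ`. -/
def permDirectSum {k l : ℕ} (σ : Equiv.Perm (Fin k)) (τ : Equiv.Perm (Fin l)) :
    Equiv.Perm (Fin (k + l)) :=
  finSumFinEquiv.symm.trans ((Equiv.sumCongr σ τ).trans finSumFinEquiv)

/-- A permutation is sum-indecomposable if it is not the direct sum of two shorter
permutations. -/
def SumIndecomposable {n : ℕ} (σ : Equiv.Perm (Fin n)) : Prop :=
  ¬ ∃ (k l : ℕ) (σ₁ : Equiv.Perm (Fin k)) (σ₂ : Equiv.Perm (Fin l)) (h : k + l = n),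
      k < n ∧ l < n ∧ (finCongr h).permCongr (permDirectSum σ₁ σ₂) = σ

/-- Pattern containment: `τ` is contained in `σ`. -/
def PermContains {k n : ℕ} (τ : Equiv.Perm (Fin k)) (σ : Equiv.Perm (Fin n)) : Prop :=
  ∃ f : Fin k → Fin n, StrictMono f ∧ ∀ a b : Fin k, τ a < τ b ↔ σ (f a) < σ (f b)

/-- The sum closure `⊕S` of a family `S` of permutations: all direct sums
`σ₁ ⊕ σ₂ ⊕ ⋯ ⊕ σ_r` with `r ≥ 1` and each `σ_i ∈ S`. -/
inductive InSumClosure (S : ∀ n : ℕ, Set (Equiv.Perm (Fin n))) :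
    ∀ n : ℕ, Equiv.Perm (Fin n) → Prop
  | single {n : ℕ} (σ : Equiv.Perm (Fin n)) (h : σ ∈ S n) : InSumClosure S n σ
  | cons {k l : ℕ} (σ : Equiv.Perm (Fin k)) (τ : Equiv.Perm (Fin l))
      (hσ : σ ∈ S k) (hτ : InSumClosure S l τ) :
      InSumClosure S (k + l) (permDirectSum σ τ)

/-- The value function of a permutation, extended by the identity. -/
def sgV {n : ℕ} (σ : Equiv.Perm (Fin n)) (i : ℕ) : ℕ :=
  if h : i < n then (σ ⟨i, h⟩ : ℕ) else i

lemma sgV_lt {n : ℕ} (σ : Equiv.Perm (Fin n)) {i : ℕ} (h : i < n) : sgV σ i < n := by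
  simp [sgV, h]

lemma sgV_inj {n : ℕ} {σ τ : Equiv.Perm (Fin n)} (h : sgV σ = sgV τ) : σ = τ := by
  ext i
  have := congrFun h i
  simpa [sgV] using this

lemma sgV_cast {m n : ℕ} (h : m = n) (σ : Equiv.Perm (Fin m)) :
    sgV ((finCongr h).permCongr σ) = sgV σ := by
  subst h
  rfl

lemma sg_cast_mem (S : ∀ n : ℕ, Set (Equiv.Perm (Fin n))) {m n : ℕ} (h : m = n)
    (σ : Equiv.Perm (Fin m)) (hσ : InSumClosure S m σ) :
    InSumClosure S n ((finCongr h).permCongr σ) := by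
  subst h
  exact hσ

lemma sgV_sum {k l : ℕ} (σ : Equiv.Perm (Fin k)) (τ : Equiv.Perm (Fin l)) (i : ℕ) :
    sgV (permDirectSum σ τ) i = if i < k then sgV σ i else k + sgV τ (i - k) := by
  unfold sgV permDirectSum
  by_cases h : i < k
  · have h2 : i < k + l := by omega
    have : (⟨i, h2⟩ : Fin (k + l)) = Fin.castAdd l ⟨i, h⟩ := rfl
    simp only [h, h2, dif_pos, if_pos, this, Equiv.trans_apply,
      finSumFinEquiv_symm_apply_castAdd, Equiv.sumCongr_apply, Sum.map_inl,
      finSumFinEquiv_apply_left, Fin.val_castAdd]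
  · by_cases h2 : i < k + l
    · have : (⟨i, h2⟩ : Fin (k + l)) = Fin.natAdd k ⟨i - k, by omega⟩ := by
        ext; simp; omega
      have h3 : i - k < l := by omega
      simp only [h, h2, dif_pos, if_false, this, h3, Equiv.trans_apply,
        finSumFinEquiv_symm_apply_natAdd, Equiv.sumCongr_apply, Sum.map_inr,
        finSumFinEquiv_apply_right, Fin.val_natAdd]
    · have h3 : ¬ i - k < l := by omega
      simp only [h, h2, h3, dif_neg, if_false, not_false_eq_true]
      omega

lemma sg_decomp {n : ℕ} (σ : Equiv.Perm (Fin n)) (k : ℕ) (hk : 0 < k) (hkn : k < n)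
    (h : ∀ i < k, sgV σ i < k) : ¬ SumIndecomposable σ := by
  obtain ⟨l, rfl⟩ := Nat.exists_eq_add_of_le hkn.le
  unfold SumIndecomposable
  rw [not_not]
  let ρ : Equiv.Perm (Fin k ⊕ Fin l) := finSumFinEquiv.trans (σ.trans finSumFinEquiv.symm)
  have hρ : Set.MapsTo ρ (Set.range Sum.inl) (Set.range Sum.inl) := by
    rintro _ ⟨i, rfl⟩
    have := h i i.2
    have hi : (i : ℕ) < k + l := by omega
    simp only [sgV, hi, dif_pos] at this
    refine ⟨⟨_, this⟩, ?_⟩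
    apply finSumFinEquiv.injective
    simp only [ρ, Equiv.trans_apply, Equiv.apply_symm_apply, finSumFinEquiv_apply_left]
    rfl
  obtain ⟨⟨σ₁, σ₂⟩, hs⟩ := Equiv.Perm.mem_sumCongrHom_range_of_perm_mapsTo_inl hρ
  refine ⟨k, l, σ₁, σ₂, rfl, hkn, by omega, ?_⟩
  have hs' : Equiv.sumCongr σ₁ σ₂ = ρ := hs
  ext i
  simp [permDirectSum, hs', ρ]

lemma sg_uniq_le {k l k' l' : ℕ} (σ : Equiv.Perm (Fin k)) (τ : Equiv.Perm (Fin l))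
    (σ' : Equiv.Perm (Fin k')) (τ' : Equiv.Perm (Fin l')) (hk : 0 < k)
    (hi : SumIndecomposable σ')
    (h : sgV (permDirectSum σ τ) = sgV (permDirectSum σ' τ')) : k' ≤ k := by
  by_contra hlt
  push Not at hlt
  refine sg_decomp σ' k hk hlt ?_ hi
  intro i hik
  have := congrFun h i
  rw [sgV_sum, sgV_sum, if_pos hik, if_pos (by omega)] at this
  rw [← this]
  exact sgV_lt σ hik

lemma sg_uniq {k l : ℕ} (σ σ' : Equiv.Perm (Fin k)) (τ τ' : Equiv.Perm (Fin l))
    (h : sgV (permDirectSum σ τ) = sgV (permDirectSum σ' τ')) : σ = σ' ∧ τ = τ' := by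
  constructor
  · apply sgV_inj
    ext i
    by_cases hik : i < k
    · have := congrFun h i
      rwa [sgV_sum, sgV_sum, if_pos hik, if_pos hik] at this
    · simp [sgV, hik]
  · apply sgV_inj
    ext i
    have := congrFun h (k + i)
    rw [sgV_sum, sgV_sum, if_neg (by omega), if_neg (by omega)] at this
    simpa using this

lemma sg_empty (S : ∀ n : ℕ, Set (Equiv.Perm (Fin n)))
    (hdc : ∀ (n : ℕ) (σ : Equiv.Perm (Fin n)), σ ∈ S n →
      ∀ (k : ℕ) (τ : Equiv.Perm (Fin k)), SumIndecomposable τ → PermContains τ σ → τ ∈ S k)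
    (h : (S 1).Nonempty) : (1 : Equiv.Perm (Fin 0)) ∈ S 0 := by
  obtain ⟨σ, hσ⟩ := h
  refine hdc 1 σ hσ 0 1 ?_ ⟨Fin.elim0, fun a => a.elim0, fun a => a.elim0⟩
  rintro ⟨k, l, _, _, _, hk, _⟩
  omega

lemma sg_surj (S : ∀ n : ℕ, Set (Equiv.Perm (Fin n))) (he : (1 : Equiv.Perm (Fin 0)) ∈ S 0)
    {n : ℕ} (σ : Equiv.Perm (Fin n)) (h : InSumClosure S n σ) (hn : 0 < n) :
    ∃ (k l : ℕ) (σ₁ : Equiv.Perm (Fin (k + 1))) (τ : Equiv.Perm (Fin l)),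
      k + 1 + l = n ∧ σ₁ ∈ S (k + 1) ∧ InSumClosure S l τ ∧
      sgV (permDirectSum σ₁ τ) = sgV σ := by
  induction h with
  | @single n σ h =>
    obtain ⟨k, rfl⟩ : ∃ k, n = k + 1 := ⟨n - 1, by omega⟩
    refine ⟨k, 0, σ, 1, rfl, h, .single _ he, ?_⟩
    ext i
    rw [sgV_sum]
    split_ifs with hi
    · rfl
    · simp [sgV, hi]; omega
  | @cons k l σ τ hσ hτ ih =>
    rcases k with _ | k
    · obtain ⟨k', l', σ₁, τ', h1, h2, h3, h4⟩ := ih (by omega)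
      refine ⟨k', l', σ₁, τ', by omega, h2, h3, ?_⟩
      rw [h4]
      ext i
      rw [sgV_sum]
      simp
    · exact ⟨k, l, σ, τ, rfl, hσ, hτ, rfl⟩

/-- The decomposition map. -/
def sgF (S : ∀ n : ℕ, Set (Equiv.Perm (Fin n))) (n : ℕ) :
    (Σ k : Fin (n + 1), ↥(S (k + 1)) × {σ : Equiv.Perm (Fin (n - k)) // InSumClosure S (n - k) σ}) →
    {σ : Equiv.Perm (Fin (n + 1)) // InSumClosure S (n + 1) σ} :=
  fun x => ⟨(finCongr (by omega : (x.1 : ℕ) + 1 + (n - x.1) = n + 1)).permCongr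
      (permDirectSum x.2.1.1 x.2.2.1),
    sg_cast_mem S _ _ (.cons _ _ x.2.1.2 x.2.2.2)⟩

lemma sg_bij (S : ∀ n : ℕ, Set (Equiv.Perm (Fin n)))
    (hindec : ∀ n, ∀ σ ∈ S n, SumIndecomposable σ)
    (he : (1 : Equiv.Perm (Fin 0)) ∈ S 0) (n : ℕ) : Function.Bijective (sgF S n) := by
  constructor
  · rintro ⟨k, ⟨σ, hσ⟩, ⟨τ, hτ⟩⟩ ⟨k', ⟨σ', hσ'⟩, ⟨τ', hτ'⟩⟩ h
    have h1 := congrArg (fun x => sgV x.1) h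
    simp only [sgF, sgV_cast] at h1
    have e1 := sg_uniq_le _ _ _ _ (by omega) (hindec _ _ hσ') h1
    have e2 := sg_uniq_le _ _ _ _ (by omega) (hindec _ _ hσ) h1.symm
    have e : k = k' := Fin.ext (by omega)
    subst e
    obtain ⟨rfl, rfl⟩ := sg_uniq _ _ _ _ h1
    rfl
  · rintro ⟨σ, hσ⟩
    obtain ⟨k, l, σ₁, τ, h1, h2, h3, h4⟩ := sg_surj S he σ hσ (by omega)
    obtain rfl : l = n - k := by omega
    refine ⟨⟨⟨k, by omega⟩, ⟨σ₁, h2⟩, ⟨τ, h3⟩⟩, ?_⟩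
    apply Subtype.ext
    apply sgV_inj
    rw [← h4]
    simp only [sgF, sgV_cast]

lemma sg_rec (S : ∀ n : ℕ, Set (Equiv.Perm (Fin n)))
    (hindec : ∀ n, ∀ σ ∈ S n, SumIndecomposable σ)
    (he : (1 : Equiv.Perm (Fin 0)) ∈ S 0) (n : ℕ) :
    Nat.card {σ : Equiv.Perm (Fin (n + 1)) // InSumClosure S (n + 1) σ} =
      ∑ k ∈ Finset.range (n + 1), Nat.card ↥(S (k + 1)) *
        Nat.card {σ : Equiv.Perm (Fin (n - k)) // InSumClosure S (n - k) σ} := by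
  rw [← Nat.card_congr (Equiv.ofBijective _ (sg_bij S hindec he n)), Nat.card_sigma,
    Finset.sum_range]
  simp only [Nat.card_prod]

lemma sg_summable (s : ℕ → ℕ) (c : ℕ) (hc : ∀ n, s n ≤ c) (x : ℝ) (hx : 1 < x) :
    Summable (fun n => (s n : ℝ) / x ^ (n + 1)) := by
  have hg : Summable (fun n : ℕ => (c : ℝ) * (1 / x) ^ (n + 1)) :=
    ((summable_nat_add_iff 1).2 (summable_geometric_of_lt_one (by positivity)
      ((div_lt_one (by linarith)).2 hx))).mul_left _
  refine Summable.of_nonneg_of_le (fun n => by positivity) (fun n => ?_) hg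
  rw [one_div, inv_pow, ← div_eq_mul_inv]
  have : (s n : ℝ) ≤ c := by exact_mod_cast hc n
  gcongr

lemma sg_anti (s : ℕ → ℕ) (c : ℕ) (h1 : ∀ n, 1 ≤ s n) (hc : ∀ n, s n ≤ c) (x y : ℝ)
    (hx : 1 < x) (hxy : x < y) :
    ∑' n : ℕ, (s n : ℝ) / y ^ (n + 1) < ∑' n : ℕ, (s n : ℝ) / x ^ (n + 1) := by
  have hx0 : 0 < x := by linarith
  refine Summable.tsum_lt_tsum (i := 0) (fun n => ?_) ?_ (sg_summable s c hc y (by linarith))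
    (sg_summable s c hc x hx)
  · show (s n : ℝ) / y ^ (n + 1) ≤ (s n : ℝ) / x ^ (n + 1)
    gcongr
  · have : (0 : ℝ) < s 0 := by exact_mod_cast h1 0
    show (s 0 : ℝ) / y ^ (0 + 1) < (s 0 : ℝ) / x ^ (0 + 1)
    gcongr

lemma sg_exists (s : ℕ → ℕ) (c : ℕ) (h1 : ∀ n, 1 ≤ s n) (hc : ∀ n, s n ≤ c) :
    ∃ γ : ℝ, 1 < γ ∧ ∑' n : ℕ, (s n : ℝ) / γ ^ (n + 1) = 1 := by
  have hgeo : ∀ x : ℝ, 1 < x → HasSum (fun n : ℕ => 1 / x ^ (n + 1)) (1 / (x - 1)) := by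
    intro x hx
    have := (hasSum_geometric_of_lt_one (r := 1 / x) (by positivity)
      ((div_lt_one (by linarith)).2 hx)).mul_left (1 / x)
    have e1 : (fun n : ℕ => 1 / x ^ (n + 1)) = fun i : ℕ => 1 / x * (1 / x) ^ i := by
      ext n
      rw [← pow_succ', one_div_pow]
    have e2 : 1 / (x - 1) = 1 / x * (1 - 1 / x)⁻¹ := by
      have hx0 : x ≠ 0 := by linarith
      have h2 : 1 - 1 / x = (x - 1) / x := by field_simp
      have h3 : x - 1 ≠ 0 := by linarith
      rw [h2]
      field_simp
    rw [e1, e2]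
    exact this
  have hcont : ContinuousOn (fun x : ℝ => ∑' n : ℕ, (s n : ℝ) / x ^ (n + 1))
      (Set.Icc 2 (c + 2)) := by
    refine continuousOn_tsum (u := fun n => (s n : ℝ) / 2 ^ (n + 1)) ?_
      (sg_summable s c hc 2 (by norm_num)) ?_
    · intro n
      refine ContinuousOn.div continuousOn_const (by fun_prop) ?_
      intro x hx
      have : 0 < x := by linarith [hx.1]
      positivity
    · intro n x hx
      have hx2 : 2 ≤ x := hx.1
      rw [Real.norm_of_nonneg (by positivity)]
      gcongr
  have hab : (2 : ℝ) ≤ c + 2 := by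
    have : (0 : ℝ) ≤ c := by positivity
    linarith
  have := intermediate_value_Icc' hab hcont
  suffices hm : (1 : ℝ) ∈ Set.Icc (∑' n : ℕ, (s n : ℝ) / ((c : ℝ) + 2) ^ (n + 1))
      (∑' n : ℕ, (s n : ℝ) / 2 ^ (n + 1)) by
    obtain ⟨γ, hγ, h⟩ := this hm
    exact ⟨γ, by linarith [hγ.1], h⟩
  constructor
  · have hg := (hgeo (c + 2) (by linarith)).mul_left (c : ℝ)
    refine (Summable.tsum_le_tsum (fun n => ?_) (sg_summable s c hc _ (by linarith))
      hg.summable).trans ?_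
    · rw [mul_one_div]
      have : (s n : ℝ) ≤ c := by exact_mod_cast hc n
      gcongr
    · rw [hg.tsum_eq, mul_one_div, div_le_one (by linarith)]
      linarith
  · have hg := hgeo 2 (by norm_num)
    have h2 : (1 : ℝ) = 1 / (2 - 1) := by norm_num
    refine (h2.trans hg.tsum_eq.symm).le.trans
      (Summable.tsum_le_tsum (fun n => ?_) hg.summable (sg_summable s c hc _ (by norm_num)))
    have : (1 : ℝ) ≤ s n := by exact_mod_cast h1 n
    gcongr

lemma sg_upper (s a : ℕ → ℕ) (γ : ℝ) (hγ : 1 < γ)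
    (hs : Summable (fun n => (s n : ℝ) / γ ^ (n + 1)))
    (h : ∑' n : ℕ, (s n : ℝ) / γ ^ (n + 1) = 1) (a0 : a 0 = 1)
    (hr : ∀ n, a (n + 1) = ∑ k ∈ Finset.range (n + 1), s k * a (n - k)) (n : ℕ) :
    (a n : ℝ) ≤ γ ^ n := by
  have hγ0 : 0 < γ := by linarith
  induction n using Nat.strong_induction_on with
  | _ n ih =>
  rcases n with _ | n
  · simp [a0]
  · rw [hr]
    push_cast
    calc ∑ k ∈ Finset.range (n + 1), (s k : ℝ) * a (n - k)
        ≤ ∑ k ∈ Finset.range (n + 1), γ ^ (n + 1) * ((s k : ℝ) / γ ^ (k + 1)) := by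
          refine Finset.sum_le_sum fun k hk => ?_
          have hk' : k ≤ n := by simpa [Nat.lt_succ_iff] using hk
          have e : γ ^ (n + 1) = γ ^ (n - k) * γ ^ (k + 1) := by
            rw [← pow_add]; congr 1; omega
          have : γ ^ (n + 1) * ((s k : ℝ) / γ ^ (k + 1)) = s k * γ ^ (n - k) := by
            rw [e]; field_simp
          rw [this]
          gcongr
          exact ih _ (by omega)
      _ = γ ^ (n + 1) * ∑ k ∈ Finset.range (n + 1), (s k : ℝ) / γ ^ (k + 1) := by
          rw [Finset.mul_sum]
      _ ≤ γ ^ (n + 1) * 1 := by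
          gcongr
          rw [← h]
          exact hs.sum_le_tsum _ (fun i _ => by positivity)
      _ = _ := mul_one _

lemma sg_lower (s a : ℕ → ℕ) (δ : ℝ) (hδ : 1 < δ) (N : ℕ)
    (h : 1 ≤ ∑ n ∈ Finset.range N, (s n : ℝ) / δ ^ (n + 1)) (a1 : ∀ n, 1 ≤ a n)
    (hr : ∀ n, a (n + 1) = ∑ k ∈ Finset.range (n + 1), s k * a (n - k)) (n : ℕ) :
    δ ^ n ≤ δ ^ N * (a n : ℝ) := by
  have hδ0 : 0 < δ := by linarith
  induction n using Nat.strong_induction_on with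
  | _ n ih =>
  by_cases hn : n ≤ N
  · have : (1 : ℝ) ≤ a n := by exact_mod_cast a1 n
    calc δ ^ n ≤ δ ^ N := pow_le_pow_right₀ hδ.le hn
      _ = δ ^ N * 1 := (mul_one _).symm
      _ ≤ _ := by gcongr
  · obtain ⟨m, rfl⟩ : ∃ m, n = m + 1 := ⟨n - 1, by omega⟩
    rw [hr]
    push_cast
    calc δ ^ (m + 1) = δ ^ (m + 1) * 1 := (mul_one _).symm
      _ ≤ δ ^ (m + 1) * ∑ n ∈ Finset.range N, (s n : ℝ) / δ ^ (n + 1) := by gcongr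
      _ = ∑ k ∈ Finset.range N, δ ^ (m + 1) * ((s k : ℝ) / δ ^ (k + 1)) := by
          rw [Finset.mul_sum]
      _ ≤ ∑ k ∈ Finset.range N, δ ^ N * ((s k : ℝ) * a (m - k)) := by
          refine Finset.sum_le_sum fun k hk => ?_
          have hk' : k < N := by simpa using hk
          have e : δ ^ (m + 1) = δ ^ (m - k) * δ ^ (k + 1) := by
            rw [← pow_add]; congr 1; omega
          have : δ ^ (m + 1) * ((s k : ℝ) / δ ^ (k + 1)) = s k * δ ^ (m - k) := by
            rw [e]; field_simp
          rw [this, mul_left_comm]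
          gcongr
          exact ih _ (by omega)
      _ ≤ ∑ k ∈ Finset.range (m + 1), δ ^ N * ((s k : ℝ) * a (m - k)) := by
          refine Finset.sum_le_sum_of_subset_of_nonneg ?_ (fun _ _ _ => by positivity)
          intro k hk
          simp at hk ⊢
          omega
      _ = _ := by rw [Finset.mul_sum]

lemma sg_analytic (s a : ℕ → ℕ) (c : ℕ) (h1 : ∀ n, 1 ≤ s n) (hc : ∀ n, s n ≤ c) (a0 : a 0 = 1)
    (hr : ∀ n, a (n + 1) = ∑ k ∈ Finset.range (n + 1), s k * a (n - k)) :
    ∃ γ : ℝ,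
      (1 < γ ∧ ∑' n : ℕ, (s n : ℝ) / γ ^ (n + 1) = 1) ∧
      (∀ γ' : ℝ, 1 < γ' → ∑' n : ℕ, (s n : ℝ) / γ' ^ (n + 1) = 1 → γ' = γ) ∧
      Tendsto (fun n : ℕ => (a n : ℝ) ^ (1 / (n : ℝ))) atTop (nhds γ) := by
  obtain ⟨γ, hγ, hsum⟩ := sg_exists s c h1 hc
  have a1 : ∀ n, 1 ≤ a n := by
    intro n
    induction n with
    | zero => omega
    | succ n ih =>
      rw [hr]
      have : s 0 * a (n - 0) ≤ ∑ k ∈ Finset.range (n + 1), s k * a (n - k) :=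
        Finset.single_le_sum (f := fun k => s k * a (n - k)) (fun _ _ => Nat.zero_le _)
          (Finset.mem_range.2 (by omega))
      exact (Nat.mul_pos (h1 0) ih).trans_le this
  refine ⟨γ, ⟨hγ, hsum⟩, ?_, ?_⟩
  · intro γ' hγ' hs'
    rcases lt_trichotomy γ' γ with h | h | h
    · have := sg_anti s c h1 hc _ _ hγ' h
      linarith
    · exact h
    · have := sg_anti s c h1 hc _ _ hγ h
      linarith
  · rw [tendsto_order]
    constructor
    · intro b hb
      obtain ⟨δ, hδ1, hδ2⟩ := exists_between (max_lt hb hγ)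
      have hbδ : b < δ := (le_max_left _ _).trans_lt hδ1
      have h1δ : 1 < δ := (le_max_right _ _).trans_lt hδ1
      have hδ0 : 0 < δ := by linarith
      have hlt := sg_anti s c h1 hc _ _ h1δ hδ2
      rw [hsum] at hlt
      have ht := (sg_summable s c hc δ h1δ).hasSum.tendsto_sum_nat
      obtain ⟨N, hN⟩ := (ht.eventually (lt_mem_nhds hlt)).exists
      have hl := sg_lower s a δ h1δ N hN.le a1 hr
      have hlim : Tendsto (fun n : ℕ => δ ^ (1 - (N : ℝ) / (n : ℝ))) atTop (nhds δ) := by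
        have h0 : Tendsto (fun n : ℕ => 1 - (N : ℝ) / (n : ℝ)) atTop (nhds (1 - 0)) :=
          tendsto_const_nhds.sub (tendsto_const_div_atTop_nhds_zero_nat _)
        have := (Real.continuous_const_rpow hδ0.ne').continuousAt.tendsto.comp h0
        rw [sub_zero, Real.rpow_one] at this
        exact this
      filter_upwards [hlim.eventually (lt_mem_nhds hbδ), eventually_gt_atTop 0] with n hn hn0
      refine hn.trans_le ?_
      have hn0' : (n : ℝ) ≠ 0 := by positivity
      have e : δ ^ (1 - (N : ℝ) / (n : ℝ)) = (δ ^ ((n : ℝ) - N)) ^ (1 / (n : ℝ)) := by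
        rw [← Real.rpow_mul hδ0.le]
        congr 1
        field_simp
      rw [e]
      refine Real.rpow_le_rpow (by positivity) ?_ (by positivity)
      rw [Real.rpow_sub hδ0, Real.rpow_natCast, Real.rpow_natCast, div_le_iff₀ (by positivity),
        mul_comm]
      exact hl n
    · intro b hb
      filter_upwards [eventually_gt_atTop 0] with n hn0
      refine lt_of_le_of_lt ?_ hb
      have hu := sg_upper s a γ hγ (sg_summable s c hc γ hγ) hsum a0 hr n
      calc (a n : ℝ) ^ (1 / (n : ℝ)) ≤ (γ ^ n) ^ (1 / (n : ℝ)) :=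
            Real.rpow_le_rpow (by positivity) hu (by positivity)
        _ = γ := by
            rw [one_div]
            exact Real.pow_rpow_inv_natCast (by linarith) (by omega)

/-- For a downward closed set `S` of sum-indecomposable permutations which is positive and
bounded, there is a unique `γ > 1` with `Σ_{n ≥ 1} |S_n| γ^(-n) = 1`, and the growth rate
of the sum closure `⊕S` exists and equals this `γ`. -/
theorem sum_closure_growth_rate (S : ∀ n : ℕ, Set (Equiv.Perm (Fin n)))
    (hindec : ∀ n, ∀ σ ∈ S n, SumIndecomposable σ)
    (hdc : ∀ (n : ℕ) (σ : Equiv.Perm (Fin n)), σ ∈ S n →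
      ∀ (k : ℕ) (τ : Equiv.Perm (Fin k)), SumIndecomposable τ → PermContains τ σ → τ ∈ S k)
    (c : ℕ) (hbound : ∀ n : ℕ, 1 ≤ n → 1 ≤ Nat.card ↥(S n) ∧ Nat.card ↥(S n) ≤ c) :
    ∃ γ : ℝ,
      (1 < γ ∧ ∑' n : ℕ, (Nat.card ↥(S (n + 1)) : ℝ) / γ ^ (n + 1) = 1) ∧
      (∀ γ' : ℝ, 1 < γ' → ∑' n : ℕ, (Nat.card ↥(S (n + 1)) : ℝ) / γ' ^ (n + 1) = 1 →
        γ' = γ) ∧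
      Tendsto
        (fun n : ℕ =>
          (Nat.card {σ : Equiv.Perm (Fin n) // InSumClosure S n σ} : ℝ) ^ (1 / (n : ℝ)))
        atTop (nhds γ) := by
  refine sg_analytic (fun n => Nat.card ↥(S (n + 1))) (fun n => Nat.card {σ : Equiv.Perm (Fin n) // InSumClosure S n σ}) c
    (fun n => (hbound (n + 1) (by omega)).1) (fun n => (hbound (n + 1) (by omega)).2) ?_ ?_
  · have he := sg_empty S hdc (by
      have h := (hbound 1 le_rfl).1
      by_contra hne
      rw [Set.not_nonempty_iff_eq_empty] at hne
      rw [hne] at h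
      simp at h)
    rw [Nat.card_eq_one_iff_unique]
    exact ⟨⟨fun a b => Subtype.ext (Subsingleton.elim _ _)⟩, ⟨1, .single _ he⟩⟩
  · intro n
    have he := sg_empty S hdc (by
      have h := (hbound 1 le_rfl).1
      by_contra hne
      rw [Set.not_nonempty_iff_eq_empty] at hne
      rw [hne] at h
      simp at h)
    exact sg_rec S hindec he n
end
end

section
/- For a sequence (b_n)_{n≥1} of positive integers bounded above, let γ_{(b_n)} denote the unique real number γ > 1 with Σ_{n≥1} b_n γ^{−n} = 1. Let (A_n)_{n≥1} be a sequence of nonempty finite sets of positive integers with ℓ_n = min A_n, u_n = max A_n, Δ_n = u_n − ℓ_n, and δ_n = δ(A_n) the largest gap of A_n, and suppose (u_n) is bounded. Then for every real number γ such that γ_{(ℓ_n)} ≤ γ ≤ γ_{(u_n)} and δ_n ≤ Σ_{i=1}^{∞} Δ_{n+i} γ^{−i} for every n, there exists a sequence (a_n) with a_n ∈ A_n for all n such that Σ_{n≥1} a_n γ^{−n} = 1, i.e., γ = γ_{(a_n)}. -/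
noncomputable section

/-- The largest gap of a finite set of reals: the maximum of `b - a` over pairs `a < b` of
elements with no element strictly between them (`0` for a singleton). -/
def largestGap (s : Finset ℝ) : ℝ :=
  sSup {d : ℝ | ∃ a ∈ s, ∃ b ∈ s, a < b ∧ (∀ x ∈ s, ¬(a < x ∧ x < b)) ∧ d = b - a}

theorem tail_summable (d : ℕ → ℕ) (c : ℕ) (hd : ∀ n, d n ≤ c) (g : ℝ) (hg : 1 < g) (n : ℕ) :
    Summable (fun i : ℕ => (d (n + i) : ℝ) / g ^ (i + 1)) := by
  have h0 : 0 < g := by linarith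
  have hs : Summable (fun i : ℕ => (c : ℝ) * (1 / g) ^ i) := by
    apply Summable.mul_left
    apply summable_geometric_of_lt_one (by positivity)
    rw [div_lt_one h0]; exact hg
  refine Summable.of_nonneg_of_le (fun i => by positivity) (fun i => ?_) hs
  have h1 : (d (n + i) : ℝ) ≤ c := by exact_mod_cast hd _
  have h2 : g ^ i ≤ g ^ (i + 1) := pow_le_pow_right₀ hg.le (by omega)
  rw [one_div, inv_pow, ← div_eq_mul_inv]
  exact div_le_div₀ (by positivity) h1 (by positivity) h2

theorem tail_le (d : ℕ → ℕ) (c : ℕ) (hd : ∀ n, d n ≤ c) (g : ℝ) (hg : 1 < g) (n : ℕ) :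
    ∑' i : ℕ, (d (n + i) : ℝ) / g ^ (i + 1) ≤ ∑' i : ℕ, (c : ℝ) / g ^ (i + 1) := by
  have h0 : 0 < g := by linarith
  refine Summable.tsum_le_tsum (fun i => ?_) (tail_summable d c hd g hg n)
    (tail_summable (fun _ => c) c (fun _ => le_rfl) g hg n)
  have h1 : (d (n + i) : ℝ) ≤ c := by exact_mod_cast hd _
  gcongr

theorem tail_rec (d : ℕ → ℕ) (c : ℕ) (hd : ∀ n, d n ≤ c) (g : ℝ) (hg : 1 < g) (n : ℕ) :
    g * ∑' i : ℕ, (d (n + i) : ℝ) / g ^ (i + 1) =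
      d n + ∑' i : ℕ, (d (n + 1 + i) : ℝ) / g ^ (i + 1) := by
  have h0 : 0 < g := by linarith
  rw [(tail_summable d c hd g hg n).tsum_eq_zero_add, mul_add, ← tsum_mul_left]
  congr 1
  · simp; field_simp
  · apply tsum_congr
    intro i
    rw [show n + (i + 1) = n + 1 + i by ring]
    field_simp
    ring

theorem tail_anti (d : ℕ → ℕ) (c : ℕ) (hd : ∀ n, d n ≤ c) (g h : ℝ) (hg : 1 < g) (hgh : g ≤ h) :
    ∑' i : ℕ, (d i : ℝ) / h ^ (i + 1) ≤ ∑' i : ℕ, (d i : ℝ) / g ^ (i + 1) := by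
  have h0 : 0 < g := by linarith
  have s1 := tail_summable d c hd g hg 0
  have s2 := tail_summable d c hd h (by linarith) 0
  simp only [zero_add] at s1 s2
  refine Summable.tsum_le_tsum (fun i => ?_) s2 s1
  gcongr

theorem gap_le (s : Finset ℝ) (a b : ℝ) (ha : a ∈ s) (hb : b ∈ s) (hab : a < b)
    (h : ∀ x ∈ s, ¬(a < x ∧ x < b)) : b - a ≤ largestGap s := by
  apply le_csSup
  · refine ((s ×ˢ s).image (fun p : ℝ × ℝ => p.2 - p.1)).finite_toSet.bddAbove.mono ?_
    rintro d ⟨x, hx, y, hy, -, -, rfl⟩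
    simp only [Finset.coe_image, Set.mem_image]
    exact ⟨(x, y), by simp [hx, hy], rfl⟩
  · exact ⟨a, ha, b, hb, hab, h, rfl⟩

theorem digit_step (S : Finset ℕ) (hS : S.Nonempty) (t L U : ℝ)
    (hg : largestGap (S.image (fun m : ℕ => (m : ℝ))) ≤ U - L)
    (h1 : (S.min' hS : ℝ) + L ≤ t) (h2 : t ≤ (S.max' hS : ℝ) + U) :
    ∃ a ∈ S, L ≤ t - a ∧ t - a ≤ U := by
  classical
  have hF : (S.filter (fun x : ℕ => (x : ℝ) + L ≤ t)).Nonempty :=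
    ⟨S.min' hS, by simp only [Finset.mem_filter]; exact ⟨S.min'_mem hS, h1⟩⟩
  obtain ⟨a, haF, hamax⟩ := Finset.exists_max_image _ id hF
  simp only [Finset.mem_filter, id] at haF hamax
  refine ⟨a, haF.1, by linarith [haF.2], ?_⟩
  by_contra hc
  push Not at hc
  have hlt : a < S.max' hS := by
    have : (a : ℝ) < (S.max' hS : ℝ) := by linarith
    exact_mod_cast this
  have hG : (S.filter (fun x : ℕ => a < x)).Nonempty :=
    ⟨S.max' hS, by simp only [Finset.mem_filter]; exact ⟨S.max'_mem hS, hlt⟩⟩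
  obtain ⟨b, hbG, hbmin⟩ := Finset.exists_min_image _ id hG
  simp only [Finset.mem_filter, id] at hbG hbmin
  have hb : t < (b : ℝ) + L := by
    by_contra hh
    push Not at hh
    have := hamax b ⟨hbG.1, hh⟩
    omega
  have := gap_le (S.image (fun m : ℕ => (m : ℝ))) a b
    (Finset.mem_image_of_mem _ haF.1) (Finset.mem_image_of_mem _ hbG.1)
    (by exact_mod_cast hbG.2) (by
      intro x hx
      obtain ⟨m, hm, rfl⟩ := Finset.mem_image.1 hx
      rintro ⟨p, q⟩
      have p' : a < m := by exact_mod_cast p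
      have q' : m < b := by exact_mod_cast q
      have := hbmin m ⟨hm, p'⟩
      omega)
  linarith

/-- Suppose `(A n)` is a sequence of nonempty finite sets of positive integers with bounded
maxima (here `A n` is the `(n+1)`-st set, weighted by `γ^-(n+1)`).  Let `γℓ` and `γu` be
the unique bases `> 1` for which the minimal and maximal digit sequences sum to `1`.  Then
every `γ ∈ [γℓ, γu]` satisfying the gap inequalities arises as
`Σ_{n ≥ 1} a_n γ^(-n) = 1` for some choice of digits `a n ∈ A n`. -/
theorem digit_sequence_exists (A : ℕ → Finset ℕ) (hne : ∀ n, (A n).Nonempty)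
    (hpos : ∀ n, ∀ x ∈ A n, 0 < x) (c : ℕ) (hbd : ∀ n, (A n).max' (hne n) ≤ c)
    (γℓ γu γ : ℝ)
    (hγℓ : 1 < γℓ ∧ ∑' n : ℕ, ((A n).min' (hne n) : ℝ) / γℓ ^ (n + 1) = 1)
    (hγu : 1 < γu ∧ ∑' n : ℕ, ((A n).max' (hne n) : ℝ) / γu ^ (n + 1) = 1)
    (hγ₁ : γℓ ≤ γ) (hγ₂ : γ ≤ γu)
    (hgap : ∀ n : ℕ, largestGap ((A n).image (fun m : ℕ => (m : ℝ))) ≤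
      ∑' i : ℕ,
        (((A (n + i + 1)).max' (hne (n + i + 1)) : ℝ) -
          ((A (n + i + 1)).min' (hne (n + i + 1)) : ℝ)) / γ ^ (i + 1)) :
    ∃ a : ℕ → ℕ, (∀ n, a n ∈ A n) ∧ ∑' n : ℕ, (a n : ℝ) / γ ^ (n + 1) = 1 := by
  have hg : 1 < γ := by linarith [hγℓ.1]
  have h0 : 0 < γ := by linarith
  let l : ℕ → ℕ := fun n => (A n).min' (hne n)
  let u : ℕ → ℕ := fun n => (A n).max' (hne n)
  have hu : ∀ n, u n ≤ c := hbd
  have hl : ∀ n, l n ≤ c := fun n => ((A n).min'_le_max' (hne n)).trans (hbd n)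
  let L : ℕ → ℝ := fun n => ∑' i : ℕ, (l (n + i) : ℝ) / γ ^ (i + 1)
  let U : ℕ → ℝ := fun n => ∑' i : ℕ, (u (n + i) : ℝ) / γ ^ (i + 1)
  have hLrec : ∀ n, γ * L n = l n + L (n + 1) := tail_rec l c hl γ hg
  have hUrec : ∀ n, γ * U n = u n + U (n + 1) := tail_rec u c hu γ hg
  have hstep : ∀ (n : ℕ) (r : ℝ), ∃ a ∈ A n, (L n ≤ r ∧ r ≤ U n) →
      (L (n + 1) ≤ γ * r - a ∧ γ * r - a ≤ U (n + 1)) := by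
    intro n r
    by_cases hr : L n ≤ r ∧ r ≤ U n
    · have hgn : largestGap ((A n).image (fun m : ℕ => (m : ℝ))) ≤ U (n + 1) - L (n + 1) := by
        refine (hgap n).trans (le_of_eq ?_)
        have := (tail_summable u c hu γ hg (n + 1)).tsum_sub (tail_summable l c hl γ hg (n + 1))
        refine Eq.trans (tsum_congr fun i => ?_) this
        rw [sub_div, show n + 1 + i = n + i + 1 by ring]
      have e1 := mul_le_mul_of_nonneg_left hr.1 h0.le
      have e2 := mul_le_mul_of_nonneg_left hr.2 h0.le
      rw [hLrec] at e1
      rw [hUrec] at e2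
      obtain ⟨a, ha, h⟩ := digit_step (A n) (hne n) (γ * r) _ _ hgn e1 e2
      exact ⟨a, ha, fun _ => h⟩
    · obtain ⟨a, ha⟩ := hne n
      exact ⟨a, ha, fun h => absurd h hr⟩
  choose f hfA hf using hstep
  let r : ℕ → ℝ := fun n => Nat.rec 1 (fun k x => γ * x - f k x) n
  have hr1 : ∀ n, r (n + 1) = γ * r n - f n (r n) := fun n => rfl
  have hr0 : r 0 = 1 := rfl
  have hinv : ∀ n, L n ≤ r n ∧ r n ≤ U n := by
    intro n
    induction n with
    | zero =>
      rw [hr0]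
      simp only [L, U, zero_add]
      constructor
      · rw [← hγℓ.2]; exact tail_anti l c hl γℓ γ hγℓ.1 hγ₁
      · rw [← hγu.2]; exact tail_anti u c hu γ γu hg hγ₂
    | succ k ih => rw [hr1]; exact hf k (r k) ih
  refine ⟨fun n => f n (r n), fun n => hfA n _, ?_⟩
  have hsum : ∀ n, ∑ i ∈ Finset.range n, (f i (r i) : ℝ) / γ ^ (i + 1) = 1 - r n / γ ^ n := by
    intro n
    induction n with
    | zero => simp [hr0]
    | succ k ih => rw [Finset.sum_range_succ, ih, hr1]; field_simp; ring
  have hlim : Filter.Tendsto (fun n => r n / γ ^ n) Filter.atTop (nhds 0) := by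
    have hK : Filter.Tendsto (fun n : ℕ => (∑' i : ℕ, (c : ℝ) / γ ^ (i + 1)) / γ ^ n)
        Filter.atTop (nhds 0) :=
      (tendsto_pow_atTop_atTop_of_one_lt hg).const_div_atTop _
    refine squeeze_zero (fun n => ?_) (fun n => ?_) hK
    · have : 0 ≤ L n := tsum_nonneg fun i => by positivity
      have := this.trans (hinv n).1
      positivity
    · have := (hinv n).2.trans (tail_le u c hu γ hg n)
      gcongr
  apply HasSum.tsum_eq
  rw [hasSum_iff_tendsto_nat_of_nonneg (fun i => by positivity)]
  simp only [hsum]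
  simpa using hlim.const_sub 1
end
end

section
/- Let θ_B ≈ 2.35526 be the unique real root of the polynomial x⁷ − 2x⁶ − x⁴ − x³ − 2x² − 2x − 1. For every ε > 0, there exist real numbers δ₁ and δ₂ with 0 < δ₁ < δ₂ < ε such that for every real γ in the interval [θ_B + δ₁, θ_B + δ₂] there is a permutation class C whose growth rate exists and equals γ, i.e., lim_{n→∞} |C_n|^{1/n} = γ. -/
noncomputable section

open Filter

/-- A permutation class: a set of permutations closed downward under containment. -/
def IsPermClass (C : ∀ n : ℕ, Set (Equiv.Perm (Fin n))) : Prop :=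
  ∀ (n : ℕ) (σ : Equiv.Perm (Fin n)), σ ∈ C n →
    ∀ (k : ℕ) (τ : Equiv.Perm (Fin k)), PermContains τ σ → τ ∈ C k

/-! ### Lehmer codes of lists and the effect of deleting one entry -/

/-- Lehmer code of a list. -/
def code : List ℕ → List ℕ
  | [] => []
  | x :: l => (l.countP (fun y => decide (y < x))) :: code l

/-- Effect on Lehmer codes of deleting the entry of rank `v`. -/
inductive Del : List ℕ → ℕ → List ℕ → Prop
  | head (c : ℕ) (w : List ℕ) : Del (c :: w) c w
  | lt (c : ℕ) (w : List ℕ) (v : ℕ) (w' : List ℕ) : Del w v w' → v < c → Del (c :: w) v ((c - 1) :: w')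
  | ge (c : ℕ) (w : List ℕ) (v : ℕ) (w' : List ℕ) : Del w v w' → c ≤ v → Del (c :: w) (v + 1) (c :: w')

theorem del_code (x : ℕ) (B : List ℕ) : ∀ A : List ℕ, (A ++ x :: B).Nodup →
    Del (code (A ++ x :: B)) ((A ++ B).countP (fun y => decide (y < x))) (code (A ++ B)) := by
  intro A
  induction A with
  | nil => intro _; exact Del.head _ _
  | cons a A ih =>
    intro h
    have h' : (A ++ x :: B).Nodup := (List.nodup_cons.1 h).2
    have hne : a ≠ x := by
      rintro rfl
      exact (List.nodup_cons.1 h).1 (by simp)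
    have ih := ih h'
    simp only [List.cons_append, code]
    rcases lt_or_gt_of_ne hne with hlt | hgt
    · have e1 : (A ++ x :: B).countP (fun y => decide (y < a))
          = (A ++ B).countP (fun y => decide (y < a)) := by
        simp [List.countP_append, hlt.le]
      have e2 : (a :: (A ++ B)).countP (fun y => decide (y < x))
          = (A ++ B).countP (fun y => decide (y < x)) + 1 := by
        simp [hlt]
      rw [e1, e2]
      refine Del.ge _ _ _ _ ih ?_
      apply List.countP_mono_left
      intro y _ hy
      simp only [decide_eq_true_eq] at hy ⊢
      omega
    · have e1 : (A ++ x :: B).countP (fun y => decide (y < a))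
          = (A ++ B).countP (fun y => decide (y < a)) + 1 := by
        simp [List.countP_append, hgt]; omega
      have e2 : (a :: (A ++ B)).countP (fun y => decide (y < x))
          = (A ++ B).countP (fun y => decide (y < x)) := by
        simp [hgt.le]
      rw [e1, e2]
      have := Del.lt ((A ++ B).countP (fun y => decide (y < a)) + 1) _ _ _ ih (by
        apply Nat.lt_succ_of_le
        apply List.countP_mono_left
        intro y _ hy
        simp only [decide_eq_true_eq] at hy ⊢
        omega)
      simpa using this

/-! ### The words -/

def ones : ℕ → List ℕ → List ℕ
  | 0, X => X
  | r + 1, X => 1 :: ones r X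

def zeros : ℕ → List ℕ → List ℕ
  | 0, X => X
  | r + 1, X => 0 :: zeros r X

def mid : ℕ → List ℕ → List ℕ
  | 0, X => X
  | r + 1, X => 2 :: 0 :: mid r X

/-- The code of the indecomposable `1^r (20)^j 1^s 0`, followed by `R`. -/
def word (r j s : ℕ) (R : List ℕ) : List ℕ := ones r (mid j (ones s (0 :: R)))

inductive InStar (A : ℕ → ℕ → ℕ → Prop) : List ℕ → Prop
  | nil : InStar A []
  | cons (r j s : ℕ) (R : List ℕ) : A r j s → InStar A R → InStar A (word r j s R)

theorem del_ones (X : List ℕ) : ∀ (r v : ℕ) (w' : List ℕ), Del (ones r X) v w' →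
    (v = 0 ∧ ∃ X', Del X 0 X' ∧ w' = zeros r X') ∨
    (1 ≤ v ∧ ((∃ r', r = r' + 1 ∧ w' = ones r' X) ∨
      ∃ X' v', 1 ≤ v' ∧ Del X v' X' ∧ w' = ones r X')) := by
  intro r
  induction r with
  | zero =>
    intro v w' h
    rcases Nat.eq_zero_or_pos v with rfl | hv
    · exact Or.inl ⟨rfl, w', h, rfl⟩
    · exact Or.inr ⟨hv, Or.inr ⟨w', v, hv, h, rfl⟩⟩
  | succ r ih =>
    intro v w' h
    simp only [ones] at h
    cases h with
    | head => exact Or.inr ⟨le_rfl, Or.inl ⟨r, rfl, rfl⟩⟩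
    | lt _ _ _ w'' h hv =>
      have hv0 : v = 0 := by omega
      subst hv0
      rcases ih _ _ h with ⟨_, X', hX, rfl⟩ | ⟨h1, _⟩
      · exact Or.inl ⟨rfl, X', hX, rfl⟩
      · omega
    | ge _ _ v' w'' h hv =>
      rcases ih _ _ h with ⟨h0, _⟩ | ⟨_, ⟨r', rfl, rfl⟩ | ⟨X', v'', h1, h2, rfl⟩⟩
      · omega
      · exact Or.inr ⟨by omega, Or.inl ⟨r' + 1, rfl, rfl⟩⟩
      · exact Or.inr ⟨by omega, Or.inr ⟨X', v'', h1, h2, rfl⟩⟩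

theorem del_zero (R : List ℕ) (v : ℕ) (w' : List ℕ) (h : Del (0 :: R) v w') :
    (v = 0 ∧ w' = R) ∨ (1 ≤ v ∧ ∃ R', Del R (v - 1) R' ∧ w' = 0 :: R') := by
  cases h with
  | head => exact Or.inl ⟨rfl, rfl⟩
  | lt _ _ _ w'' h hv => omega
  | ge _ _ v' w'' h hv => exact Or.inr ⟨by omega, w'', h, rfl⟩

theorem del_mid (s : ℕ) (R : List ℕ) : ∀ (j v : ℕ) (w' : List ℕ),
    Del (mid j (ones s (0 :: R))) v w' →
    (v = 0 ∧ ((j = 0 ∧ w' = zeros s R) ∨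
      ∃ j', j = j' + 1 ∧ w' = 1 :: mid j' (ones s (0 :: R)))) ∨
    (1 ≤ v ∧ ((∃ a b, j = a + b + 1 ∧ w' = mid a (0 :: mid b (ones s (0 :: R)))) ∨
      (∃ a b, j = a + b + 2 ∧ w' = mid a (1 :: 0 :: 1 :: mid b (ones s (0 :: R)))) ∨
      (∃ j', j = j' + 1 ∧ w' = mid j' (1 :: 0 :: zeros s R)) ∨
      (∃ s', s = s' + 1 ∧ w' = mid j (ones s' (0 :: R))) ∨
      ∃ R' v', Del R v' R' ∧ w' = mid j (ones s (0 :: R')))) := by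
  intro j
  induction j with
  | zero =>
    intro v w' h
    rcases del_ones _ _ _ _ h with ⟨rfl, X', hX, rfl⟩ | ⟨h1, ⟨r', rfl, rfl⟩ | ⟨X', v', h2, h3, rfl⟩⟩
    · rcases del_zero _ _ _ hX with ⟨_, rfl⟩ | ⟨h, _⟩
      · exact Or.inl ⟨rfl, Or.inl ⟨rfl, rfl⟩⟩
      · omega
    · exact Or.inr ⟨h1, Or.inr (Or.inr (Or.inr (Or.inl ⟨r', rfl, rfl⟩)))⟩
    · rcases del_zero _ _ _ h3 with ⟨rfl, rfl⟩ | ⟨h, R', hR, rfl⟩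
      · omega
      · exact Or.inr ⟨h1, Or.inr (Or.inr (Or.inr (Or.inr ⟨R', _, hR, rfl⟩)))⟩
  | succ j ih =>
    intro v w' h
    simp only [mid] at h
    cases h with
    | head => exact Or.inr ⟨by omega, Or.inl ⟨0, j, by omega, rfl⟩⟩
    | lt _ _ _ w'' h hv =>
      rcases del_zero _ _ _ h with ⟨rfl, rfl⟩ | ⟨h1, Y, hY, rfl⟩
      · exact Or.inl ⟨rfl, Or.inr ⟨j, rfl, rfl⟩⟩
      · have hv1 : v = 1 := by omega
        subst hv1
        refine Or.inr ⟨le_rfl, ?_⟩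
        rcases ih _ _ hY with ⟨_, ⟨rfl, rfl⟩ | ⟨j', rfl, rfl⟩⟩ | ⟨h, _⟩
        · exact Or.inr (Or.inr (Or.inl ⟨0, rfl, rfl⟩))
        · exact Or.inr (Or.inl ⟨0, j', by omega, rfl⟩)
        · omega
    | ge _ _ v' w'' h hv =>
      refine Or.inr ⟨by omega, ?_⟩
      rcases del_zero _ _ _ h with ⟨rfl, rfl⟩ | ⟨h1, Y, hY, rfl⟩
      · omega
      · rcases ih _ _ hY with ⟨h, _⟩ | ⟨_, ⟨a, b, rfl, rfl⟩ | ⟨a, b, rfl, rfl⟩ | ⟨j', rfl, rfl⟩ |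
          ⟨s', rfl, rfl⟩ | ⟨R', v', hR, rfl⟩⟩
        · omega
        · exact Or.inl ⟨a + 1, b, by omega, rfl⟩
        · exact Or.inr (Or.inl ⟨a + 1, b, by omega, rfl⟩)
        · exact Or.inr (Or.inr (Or.inl ⟨j' + 1, rfl, rfl⟩))
        · exact Or.inr (Or.inr (Or.inr (Or.inl ⟨s', rfl, rfl⟩)))
        · exact Or.inr (Or.inr (Or.inr (Or.inr ⟨_, _, hR, rfl⟩)))

/-- Closure conditions on the set of allowed triples. -/
structure Closed (A : ℕ → ℕ → ℕ → Prop) : Prop where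
  c0 : A 0 0 0
  c1 : ∀ r j s, A r (j + 1) s → A 1 j s
  c2 : ∀ r j s, A (r + 1) j s → A r j s
  c3 : ∀ r a b s, A r (a + b + 1) s → A r a 0 ∧ A 0 b s
  c4 : ∀ r a b s, A r (a + b + 2) s → A r a 1 ∧ A 1 b s
  c5 : ∀ r j s, A r (j + 1) s → A r j 1
  c6 : ∀ r j s, A r j (s + 1) → A r j s

theorem inStar_zeros {A : ℕ → ℕ → ℕ → Prop} (hA : Closed A) {R : List ℕ} (hR : InStar A R) :
    ∀ r, InStar A (zeros r R)
  | 0 => hR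
  | r + 1 => InStar.cons 0 0 0 _ hA.c0 (inStar_zeros hA hR r)

theorem inStar_del {A : ℕ → ℕ → ℕ → Prop} (hA : Closed A) {w : List ℕ} (hw : InStar A w) :
    ∀ (v : ℕ) (w' : List ℕ), Del w v w' → InStar A w' := by
  induction hw with
  | nil => intro v w' h; cases h
  | cons r j s R h hR ih =>
    intro v w' hd
    rcases del_ones _ _ _ _ hd with ⟨rfl, X', hX, rfl⟩ | ⟨h1, ⟨r', rfl, rfl⟩ | ⟨X', v', h2, h3, rfl⟩⟩
    · apply inStar_zeros hA
      rcases del_mid _ _ _ _ _ hX with ⟨_, ⟨rfl, rfl⟩ | ⟨j', rfl, rfl⟩⟩ | ⟨h, _⟩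
      · exact inStar_zeros hA hR _
      · exact InStar.cons 1 j' s R (hA.c1 _ _ _ h) hR
      · omega
    · exact InStar.cons r' j s R (hA.c2 _ _ _ h) hR
    · rcases del_mid _ _ _ _ _ h3 with ⟨h, _⟩ | ⟨_, ⟨a, b, rfl, rfl⟩ | ⟨a, b, rfl, rfl⟩ |
        ⟨j', rfl, rfl⟩ | ⟨s', rfl, rfl⟩ | ⟨R', v', hR', rfl⟩⟩
      · omega
      · exact InStar.cons r a 0 _ (hA.c3 _ _ _ _ h).1 (InStar.cons 0 b s R (hA.c3 _ _ _ _ h).2 hR)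
      · exact InStar.cons r a 1 _ (hA.c4 _ _ _ _ h).1 (InStar.cons 1 b s R (hA.c4 _ _ _ _ h).2 hR)
      · exact InStar.cons r j' 1 _ (hA.c5 _ _ _ h) (inStar_zeros hA hR _)
      · exact InStar.cons r j s' R (hA.c6 _ _ _ h) hR
      · exact InStar.cons r j s R' h (ih _ _ hR')

theorem inStar_sublist {A : ℕ → ℕ → ℕ → Prop} (hA : Closed A) {l₁ l₂ : List ℕ}
    (h : l₁.Sublist l₂) : ∀ P : List ℕ, (P ++ l₂).Nodup → InStar A (code (P ++ l₂)) →
      InStar A (code (P ++ l₁)) := by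
  induction h with
  | slnil => intro P _ h; exact h
  | @cons l₁ l₂ a _ ih =>
    intro P hn h
    refine ih P (hn.sublist ?_) (inStar_del hA h _ _ (del_code a l₂ P hn))
    exact List.Sublist.append_left (List.sublist_cons_self _ _) _
  | @cons_cons l₁ l₂ a _ ih =>
    intro P hn h
    have := ih (P ++ [a]) (by simpa using hn) (by simpa using h)
    simpa using this

/-! ### From permutations to codes -/

def toL {n : ℕ} (σ : Equiv.Perm (Fin n)) : List ℕ := (List.finRange n).map (fun i => (σ i : ℕ))

theorem code_congr {α : Type} (g h : α → ℕ) (hgh : ∀ a b, g a < g b ↔ h a < h b) :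
    ∀ l : List α, code (l.map g) = code (l.map h) := by
  intro l
  induction l with
  | nil => rfl
  | cons a l ih =>
    simp only [List.map_cons, code, ih, List.countP_map]
    congr 1
    apply List.countP_congr
    intro x _
    simp [hgh]

theorem toL_nodup {n : ℕ} (σ : Equiv.Perm (Fin n)) : (toL σ).Nodup :=
  (List.nodup_finRange n).map (Fin.val_injective.comp σ.injective)

/-- The class given by a set of allowed triples. -/
def cls (A : ℕ → ℕ → ℕ → Prop) (n : ℕ) : Set (Equiv.Perm (Fin n)) := {σ | InStar A (code (toL σ))}

theorem map_sublist_finRange {k n : ℕ} (f : Fin k → Fin n) (hf : StrictMono f) :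
    ((List.finRange k).map f).Sublist (List.finRange n) := by
  apply List.sublist_of_subperm_of_pairwise (r := (· < ·))
  · apply List.subperm_of_subset
    · exact (List.nodup_finRange k).map hf.injective
    · intro x _; simp
  · rw [List.pairwise_map]
    exact (List.pairwise_lt_finRange k).imp (fun h => hf h)
  · exact List.pairwise_lt_finRange n

theorem cls_isPermClass {A : ℕ → ℕ → ℕ → Prop} (hA : Closed A) : IsPermClass (cls A) := by
  rintro n σ hσ k τ ⟨f, hf, hτ⟩
  have e : code (toL τ) = code ((List.finRange k).map (fun i => (σ (f i) : ℕ))) :=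
    code_congr _ _ (by intro a b; exact hτ a b) _
  have hs : ((List.finRange k).map (fun i => (σ (f i) : ℕ))).Sublist (toL σ) := by
    have := (map_sublist_finRange f hf).map (fun i => (σ i : ℕ))
    simpa [toL, List.map_map, Function.comp_def] using this
  change InStar A (code (toL τ))
  rw [e]
  exact inStar_sublist hA hs [] (toL_nodup σ) hσ

/-! ### Counting -/

theorem toL_perm {n : ℕ} (σ : Equiv.Perm (Fin n)) : (toL σ).Perm (List.range n) := by
  rw [List.perm_ext_iff_of_nodup (toL_nodup σ) List.nodup_range]
  intro a
  simp only [toL, List.mem_map, List.mem_finRange, true_and, List.mem_range]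
  constructor
  · rintro ⟨i, rfl⟩; exact (σ i).2
  · intro h; exact ⟨σ.symm ⟨a, h⟩, by simp⟩

theorem countP_lt_strict (S : List ℕ) (x y : ℕ) (hx : x ∈ S) (h : x < y) :
    S.countP (fun z => decide (z < x)) < S.countP (fun z => decide (z < y)) := by
  obtain ⟨P, Q, rfl⟩ := List.append_of_mem hx
  have h1 : P.countP (fun z => decide (z < x)) ≤ P.countP (fun z => decide (z < y)) := by
    apply List.countP_mono_left
    intro z _ hz
    simp only [decide_eq_true_eq] at hz ⊢
    omega
  have h2 : Q.countP (fun z => decide (z < x)) ≤ Q.countP (fun z => decide (z < y)) := by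
    apply List.countP_mono_left
    intro z _ hz
    simp only [decide_eq_true_eq] at hz ⊢
    omega
  simp [List.countP_append, h]
  omega

theorem code_inj : ∀ l l' : List ℕ, l.Perm l' → code l = code l' → l = l' := by
  intro l
  induction l with
  | nil => intro l' h _; exact (List.nil_perm.1 h).symm
  | cons x l ih =>
    intro l' h hc
    cases l' with
    | nil => exact absurd h.length_eq (by simp)
    | cons y l' =>
      simp only [code, List.cons.injEq] at hc
      have hxy : x = y := by
        have e1 : (x :: l).countP (fun z => decide (z < x)) = (x :: l).countP (fun z => decide (z < y)) := by
          rw [h.countP_eq (fun z => decide (z < y))]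
          simpa using hc.1
        have hy : y ∈ x :: l := h.mem_iff.2 (by simp)
        rcases lt_trichotomy x y with hlt | heq | hgt
        · have := countP_lt_strict (x :: l) x y (by simp) hlt; omega
        · exact heq
        · have := countP_lt_strict (x :: l) y x hy hgt; omega
      subst hxy
      rw [ih l' ((List.perm_cons x).1 h) hc.2]

def Valid : List ℕ → Prop
  | [] => True
  | c :: w => c ≤ w.length ∧ Valid w

theorem countP_range (c : ℕ) : ∀ n, c ≤ n → (List.range n).countP (fun z => decide (z < c)) = c := by
  intro n h
  obtain ⟨d, rfl⟩ := Nat.exists_eq_add_of_le h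
  rw [List.range_add, List.countP_append]
  have h1 : (List.range c).countP (fun z => decide (z < c)) = c := by
    conv_rhs => rw [← List.length_range (n := c)]
    rw [List.countP_eq_length]
    intro a ha
    simpa using ha
  have h2 : ((List.range d).map (fun x => c + x)).countP (fun z => decide (z < c)) = 0 := by
    rw [List.countP_eq_zero]
    intro a ha
    simp only [List.mem_map] at ha
    obtain ⟨b, _, rfl⟩ := ha
    simp
  omega

theorem exists_code : ∀ w : List ℕ, Valid w → ∃ l : List ℕ, l.Perm (List.range w.length) ∧ code l = w := by
  intro w
  induction w with
  | nil => intro _; exact ⟨[], by simp, rfl⟩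
  | cons c w ih =>
    rintro ⟨hc, hw⟩
    obtain ⟨l, hl, rfl⟩ := ih hw
    set n := (code l).length with hn
    let sh : ℕ → ℕ := fun x => if x < c then x else x + 1
    have hsh : ∀ a b, sh a < sh b ↔ a < b := by
      intro a b; simp only [sh]; split_ifs <;> omega
    have hinj : Function.Injective sh := by
      intro a b h; simp only [sh] at h; split_ifs at h <;> omega
    refine ⟨c :: l.map sh, ?_, ?_⟩
    · have h1 : (c :: l.map sh).Perm (c :: (List.range n).map sh) := (hl.map sh).cons c
      refine h1.trans ?_
      rw [List.perm_ext_iff_of_nodup]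
      · intro a
        simp only [List.mem_cons, List.mem_map, List.mem_range, List.length_cons, sh]
        constructor
        · rintro (rfl | ⟨b, hb, rfl⟩)
          · omega
          · split_ifs <;> omega
        · intro ha
          rcases lt_trichotomy a c with h | h | h
          · exact Or.inr ⟨a, by omega, by simp [h]⟩
          · exact Or.inl h
          · refine Or.inr ⟨a - 1, by omega, ?_⟩
            rw [if_neg (by omega)]; omega
      · rw [List.nodup_cons]
        refine ⟨?_, List.nodup_range.map hinj⟩
        simp only [List.mem_map, not_exists, not_and, sh]
        intro b _
        split_ifs <;> omega
      · exact List.nodup_range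
    · simp only [code]
      congr 1
      · rw [List.countP_map, hl.countP_eq]
        refine Eq.trans ?_ (countP_range c n hc)
        apply List.countP_congr
        intro x _
        simp only [Function.comp, sh, decide_eq_true_eq]
        split_ifs <;> omega
      · have := code_congr sh id (by intro a b; exact hsh a b) l
        simpa using this

theorem valid_ones (X : List ℕ) (hX : Valid X) (hl : 1 ≤ X.length) :
    ∀ r, Valid (ones r X) ∧ 1 ≤ (ones r X).length
  | 0 => ⟨hX, hl⟩
  | r + 1 => ⟨⟨(valid_ones X hX hl r).2, (valid_ones X hX hl r).1⟩, by simp [ones]⟩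

theorem valid_mid (X : List ℕ) (hX : Valid X) (hl : 1 ≤ X.length) :
    ∀ r, Valid (mid r X) ∧ 1 ≤ (mid r X).length
  | 0 => ⟨hX, hl⟩
  | r + 1 => by
    have := valid_mid X hX hl r
    refine ⟨⟨?_, ?_, this.1⟩, ?_⟩
    · simp; exact this.2
    · omega
    · simp [mid]

theorem inStar_valid {A : ℕ → ℕ → ℕ → Prop} {w : List ℕ} (hw : InStar A w) : Valid w := by
  induction hw with
  | nil => trivial
  | cons r j s R h hR ih =>
    have h0 : Valid (0 :: R) := ⟨Nat.zero_le _, ih⟩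
    have h1 := valid_ones _ h0 (by simp) s
    have h2 := valid_mid _ h1.1 h1.2 j
    exact (valid_ones _ h2.1 h2.2 r).1

theorem length_code : ∀ l : List ℕ, (code l).length = l.length
  | [] => rfl
  | _ :: l => by simp [code, length_code l]

/-- Words of length `n`. -/
def W (A : ℕ → ℕ → ℕ → Prop) (n : ℕ) : Type := {w : List ℕ // w.length = n ∧ InStar A w}

def toW (A : ℕ → ℕ → ℕ → Prop) (n : ℕ) (σ : cls A n) : W A n :=
  ⟨code (toL σ.1), by rw [length_code]; simp [toL], σ.2⟩

theorem toW_bijective (A : ℕ → ℕ → ℕ → Prop) (n : ℕ) : Function.Bijective (toW A n) := by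
  constructor
  · rintro ⟨σ, hσ⟩ ⟨τ, hτ⟩ h
    have h : code (toL σ) = code (toL τ) := congrArg Subtype.val h
    have h2 := code_inj _ _ ((toL_perm σ).trans (toL_perm τ).symm) h
    have : σ = τ := by
      ext i
      exact List.map_inj_left.1 h2 i (List.mem_finRange i)
    subst this
    rfl
  · rintro ⟨w, hw, hs⟩
    obtain ⟨l, hl, rfl⟩ := exists_code w (inStar_valid hs)
    subst hw
    have hlen : l.length = (code l).length := (length_code l).symm
    have hmem : ∀ i : Fin (code l).length, l[i.1]'(by have := i.2; omega) < (code l).length := by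
      intro i
      exact List.mem_range.1 (hl.mem_iff.1 (List.getElem_mem _))
    let f : Fin (code l).length → Fin (code l).length := fun i => ⟨l[i.1]'(by have := i.2; omega), hmem i⟩
    have hnd : l.Nodup := hl.nodup_iff.2 List.nodup_range
    have hf : Function.Injective f := by
      intro a b hab
      have : l[a.1]'(by have := a.2; omega) = l[b.1]'(by have := b.2; omega) := congrArg Fin.val hab
      exact Fin.ext ((hnd.getElem_inj_iff).1 this)
    let σ : Equiv.Perm (Fin (code l).length) := Equiv.ofBijective f (Finite.injective_iff_bijective.1 hf)
    have e : toL σ = l := by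
      apply List.ext_getElem
      · simp [toL, hlen]
      · intro i h1 h2
        simp [toL, σ, f]
    refine ⟨⟨σ, ?_⟩, ?_⟩
    · change InStar A (code (toL σ)); rw [e]; exact hs
    · apply Subtype.ext
      change code (toL σ) = code l
      rw [e]

theorem card_cls (A : ℕ → ℕ → ℕ → Prop) (n : ℕ) : Nat.card (cls A n) = Nat.card (W A n) :=
  Nat.card_congr (Equiv.ofBijective _ (toW_bijective A n))

instance (A : ℕ → ℕ → ℕ → Prop) (n : ℕ) : Finite (W A n) :=
  Finite.of_surjective _ (toW_bijective A n).2

/-! ### Unique decoding -/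

theorem ones_inj (X X' : List ℕ) (hX : X.head? ≠ some 1) (hX' : X'.head? ≠ some 1) :
    ∀ r r', ones r X = ones r' X' → r = r' ∧ X = X'
  | 0, 0, h => ⟨rfl, h⟩
  | 0, r' + 1, h => by
    simp only [ones] at h; subst h; simp at hX
  | r + 1, 0, h => by
    simp only [ones] at h; subst h; simp at hX'
  | r + 1, r' + 1, h => by
    simp only [ones, List.cons.injEq, true_and] at h
    have := ones_inj X X' hX hX' r r' h
    exact ⟨by omega, this.2⟩

theorem mid_inj (X X' : List ℕ) (hX : X.head? ≠ some 2) (hX' : X'.head? ≠ some 2) :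
    ∀ r r', mid r X = mid r' X' → r = r' ∧ X = X'
  | 0, 0, h => ⟨rfl, h⟩
  | 0, r' + 1, h => by
    simp only [mid] at h; subst h; simp at hX
  | r + 1, 0, h => by
    simp only [mid] at h; subst h; simp at hX'
  | r + 1, r' + 1, h => by
    simp only [mid, List.cons.injEq, true_and] at h
    have := mid_inj X X' hX hX' r r' h
    exact ⟨by omega, this.2⟩

theorem head_ones (s : ℕ) (R : List ℕ) : (ones s (0 :: R)).head? ≠ some 2 := by
  cases s <;> simp [ones]

theorem head_mid (j s : ℕ) (R : List ℕ) (h : j = 0 → s = 0) :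
    (mid j (ones s (0 :: R))).head? ≠ some 1 := by
  cases j with
  | zero => rw [h rfl]; simp [mid, ones]
  | succ j => simp [mid]

theorem word_inj {r j s r' j' s' : ℕ} {R R' : List ℕ} (h : j = 0 → s = 0) (h' : j' = 0 → s' = 0)
    (e : word r j s R = word r' j' s' R') : r = r' ∧ j = j' ∧ s = s' ∧ R = R' := by
  obtain ⟨h1, e⟩ := ones_inj _ _ (head_mid j s R h) (head_mid j' s' R' h') _ _ e
  obtain ⟨h2, e⟩ := mid_inj _ _ (head_ones s R) (head_ones s' R') _ _ e
  obtain ⟨h3, e⟩ := ones_inj _ _ (by simp) (by simp) _ _ e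
  exact ⟨h1, h2, h3, by simpa using e⟩

theorem length_ones (X : List ℕ) : ∀ r, (ones r X).length = r + X.length
  | 0 => by simp [ones]
  | r + 1 => by simp [ones, length_ones X r]; omega

theorem length_mid (X : List ℕ) : ∀ r, (mid r X).length = 2 * r + X.length
  | 0 => by simp [mid]
  | r + 1 => by simp [mid, length_mid X r]; omega

theorem length_word (r j s : ℕ) (R : List ℕ) :
    (word r j s R).length = r + s + 1 + 2 * j + R.length := by
  simp [word, length_ones, length_mid]; omega

theorem ones_ones (X : List ℕ) (s : ℕ) : ∀ r, ones r (ones s X) = ones (r + s) X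
  | 0 => by simp [ones]
  | r + 1 => by
    rw [show r + 1 + s = (r + s) + 1 by omega]
    simp [ones, ones_ones X s r]

/-- Canonical triples `(j, r, s)` whose word has length `k`. -/
def Tri (A : ℕ → ℕ → ℕ → Prop) (k : ℕ) : Type :=
  {p : ℕ × ℕ × ℕ // (A p.2.1 p.1 p.2.2 ∧ (p.1 = 0 → p.2.2 = 0)) ∧ p.2.1 + p.2.2 + 1 + 2 * p.1 = k}

instance (A : ℕ → ℕ → ℕ → Prop) (k : ℕ) : Finite (Tri A k) := by
  apply Set.Finite.to_subtype
  apply Set.Finite.subset (Set.finite_Iic ((k, k, k) : ℕ × ℕ × ℕ))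
  rintro ⟨j, r, s⟩ ⟨_, h⟩
  simp only [Set.mem_Iic, Prod.mk_le_mk]
  simp only at h
  omega

def glue (A : ℕ → ℕ → ℕ → Prop) (n : ℕ) :
    (Σ k : Fin (n + 1), Tri A (k.1 + 1) × W A (n - k.1)) → W A (n + 1) :=
  fun x => ⟨word x.2.1.1.2.1 x.2.1.1.1 x.2.1.1.2.2 x.2.2.1, by
    rw [length_word, x.2.2.2.1, x.2.1.2.2]; have := x.1.2; omega,
    InStar.cons _ _ _ _ x.2.1.2.1.1 x.2.2.2.2⟩

theorem glue_bijective (A : ℕ → ℕ → ℕ → Prop) (hA : ∀ r s, A r 0 s → A (r + s) 0 0) (n : ℕ) :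
    Function.Bijective (glue A n) := by
  constructor
  · rintro ⟨⟨k, hk⟩, ⟨⟨j, r, s⟩, ⟨hp1, hp2⟩, hp3⟩, ⟨R, hR1, hR2⟩⟩
      ⟨⟨k', hk'⟩, ⟨⟨j', r', s'⟩, ⟨hp1', hp2'⟩, hp3'⟩, ⟨R', hR1', hR2'⟩⟩ h
    have h : word r j s R = word r' j' s' R' := congrArg Subtype.val h
    obtain ⟨rfl, rfl, rfl, rfl⟩ := word_inj hp2 hp2' h
    simp only at hp3 hp3'
    obtain rfl : k = k' := by omega
    rfl
  · rintro ⟨w, hw, hs⟩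
    have key : ∃ r j s R, A r j s ∧ (j = 0 → s = 0) ∧ InStar A R ∧ w = word r j s R := by
      cases hs with
      | nil => simp at hw
      | cons r j s R h hR =>
        cases j with
        | zero => exact ⟨r + s, 0, 0, R, hA _ _ h, by simp, hR, by
            simp only [word, mid, ones]; exact ones_ones _ _ _⟩
        | succ j => exact ⟨r, j + 1, s, R, h, by simp, hR, rfl⟩
    obtain ⟨r, j, s, R, h, hjs, hR, rfl⟩ := key
    rw [length_word] at hw
    exact ⟨⟨⟨r + s + 2 * j, by omega⟩, ⟨(j, r, s), ⟨h, hjs⟩, by simp only; omega⟩,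
      ⟨R, by simp only; omega, hR⟩⟩, rfl⟩

theorem card_W_zero (A : ℕ → ℕ → ℕ → Prop) : Nat.card (W A 0) = 1 := by
  rw [Nat.card_eq_one_iff_unique]
  constructor
  · constructor
    rintro ⟨w, hw, _⟩ ⟨w', hw', _⟩
    apply Subtype.ext
    simp only
    rw [List.length_eq_zero_iff.1 hw, List.length_eq_zero_iff.1 hw']
  · exact ⟨⟨[], rfl, InStar.nil⟩⟩

theorem card_W_succ (A : ℕ → ℕ → ℕ → Prop) (hA : ∀ r s, A r 0 s → A (r + s) 0 0) (n : ℕ) :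
    Nat.card (W A (n + 1)) =
      ∑ k ∈ Finset.range (n + 1), Nat.card (Tri A (k + 1)) * Nat.card (W A (n - k)) := by
  rw [← Nat.card_congr (Equiv.ofBijective _ (glue_bijective A hA n)), Nat.card_sigma,
    Finset.sum_range]
  simp [Nat.card_prod]

/-! ### Growth rates from a renewal recurrence -/

theorem growth (a s : ℕ → ℕ) (ha0 : a 0 = 1)
    (hrec : ∀ n, a (n + 1) = ∑ k ∈ Finset.range (n + 1), s (k + 1) * a (n - k))
    (hs1 : 1 ≤ s 1) (γ : ℝ) (hγ : 1 < γ)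
    (hsum : HasSum (fun k => (s (k + 1) : ℝ) * γ⁻¹ ^ (k + 1)) 1) :
    Tendsto (fun n : ℕ => (a n : ℝ) ^ (1 / (n : ℝ))) atTop (nhds γ) := by
  have hγ0 : 0 < γ := by linarith
  have hupper : ∀ n, (a n : ℝ) ≤ γ ^ n := by
    intro n
    induction n using Nat.strong_induction_on with
    | _ n ih =>
      cases n with
      | zero => simp [ha0]
      | succ n =>
        rw [hrec]
        push_cast
        calc ∑ k ∈ Finset.range (n + 1), (s (k + 1) : ℝ) * (a (n - k) : ℝ)
            ≤ ∑ k ∈ Finset.range (n + 1), γ ^ (n + 1) * ((s (k + 1) : ℝ) * γ⁻¹ ^ (k + 1)) := by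
              apply Finset.sum_le_sum
              intro k hk
              have hk' : k ≤ n := by simpa [Nat.lt_succ_iff] using hk
              have e : γ ^ (n + 1) * γ⁻¹ ^ (k + 1) = γ ^ (n - k) := by
                rw [show n + 1 = (n - k) + (k + 1) by omega, pow_add, mul_assoc, ← mul_pow,
                  mul_inv_cancel₀ hγ0.ne', one_pow, mul_one]
              calc (s (k + 1) : ℝ) * (a (n - k) : ℝ) ≤ (s (k + 1) : ℝ) * γ ^ (n - k) :=
                    mul_le_mul_of_nonneg_left (ih _ (by omega)) (Nat.cast_nonneg _)
                _ = _ := by rw [← e]; ring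
          _ = γ ^ (n + 1) * ∑ k ∈ Finset.range (n + 1), ((s (k + 1) : ℝ) * γ⁻¹ ^ (k + 1)) := by
              rw [Finset.mul_sum]
          _ ≤ γ ^ (n + 1) * 1 := by
              apply mul_le_mul_of_nonneg_left _ (by positivity)
              exact sum_le_hasSum _ (fun k _ => by positivity) hsum
          _ = γ ^ (n + 1) := mul_one _
  have hone : ∀ n, 1 ≤ a n := by
    intro n
    induction n with
    | zero => simp [ha0]
    | succ n ih =>
      rw [hrec]
      calc 1 ≤ s (0 + 1) * a (n - 0) := Nat.mul_pos hs1 ih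
        _ ≤ _ := Finset.single_le_sum (f := fun k => s (k + 1) * a (n - k))
              (fun _ _ => Nat.zero_le _) (by simp)
  have hlower : ∀ g : ℝ, 1 < g → g < γ → ∃ c : ℝ, 0 < c ∧ ∀ n, c * g ^ n ≤ a n := by
    intro g hg1 hg
    have hg0 : 0 < g := by linarith
    have hinv : γ⁻¹ < g⁻¹ := by
      rw [inv_lt_inv₀ hγ0 hg0]; exact hg
    have hK : ∃ K : ℕ, 1 ≤ ∑ k ∈ Finset.range K, ((s (k + 1) : ℝ) * g⁻¹ ^ (k + 1)) := by
      have ht := hsum.tendsto_sum_nat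
      have hev := (tendsto_order.1 ht).1 (1 - (g⁻¹ - γ⁻¹)) (by linarith)
      obtain ⟨K, hK⟩ := (hev.and (eventually_ge_atTop 1)).exists
      obtain ⟨hK1, hK2⟩ := hK
      refine ⟨K, ?_⟩
      obtain ⟨K, rfl⟩ := Nat.exists_eq_add_of_le' hK2
      rw [Finset.sum_range_succ'] at hK1 ⊢
      have h1 : ∑ k ∈ Finset.range K, ((s (k + 1 + 1) : ℝ) * γ⁻¹ ^ (k + 1 + 1)) ≤
          ∑ k ∈ Finset.range K, ((s (k + 1 + 1) : ℝ) * g⁻¹ ^ (k + 1 + 1)) := by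
        apply Finset.sum_le_sum
        intro k _
        gcongr
      have h2 : (1 : ℝ) ≤ (s 1 : ℝ) := by exact_mod_cast hs1
      simp only [zero_add, pow_one] at hK1 ⊢
      nlinarith
    obtain ⟨K, hK⟩ := hK
    refine ⟨(g ^ K)⁻¹, by positivity, ?_⟩
    intro n
    induction n using Nat.strong_induction_on with
    | _ n ih =>
      by_cases hn : n ≤ K
      · have h1 : (1 : ℝ) ≤ a n := by exact_mod_cast hone n
        refine le_trans ?_ h1
        rw [inv_mul_le_iff₀ (by positivity), mul_one]
        exact pow_le_pow_right₀ hg1.le hn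
      · push Not at hn
        cases n with
        | zero => omega
        | succ n =>
          rw [hrec]
          push_cast
          calc (g ^ K)⁻¹ * g ^ (n + 1) ≤ (g ^ K)⁻¹ * g ^ (n + 1) *
                ∑ k ∈ Finset.range K, ((s (k + 1) : ℝ) * g⁻¹ ^ (k + 1)) :=
                le_mul_of_one_le_right (by positivity) hK
            _ = ∑ k ∈ Finset.range K, (s (k + 1) : ℝ) * ((g ^ K)⁻¹ * g ^ (n - k)) := by
                rw [Finset.mul_sum]
                apply Finset.sum_congr rfl
                intro k hk
                have hk' : k < K := by simpa using hk
                have e : g ^ (n + 1) * g⁻¹ ^ (k + 1) = g ^ (n - k) := by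
                  rw [show n + 1 = (n - k) + (k + 1) by omega, pow_add, mul_assoc, ← mul_pow,
                    mul_inv_cancel₀ hg0.ne', one_pow, mul_one]
                rw [← e]; ring
            _ ≤ ∑ k ∈ Finset.range K, (s (k + 1) : ℝ) * (a (n - k) : ℝ) := by
                apply Finset.sum_le_sum
                intro k _
                exact mul_le_mul_of_nonneg_left (ih _ (by omega)) (Nat.cast_nonneg _)
            _ ≤ ∑ k ∈ Finset.range (n + 1), (s (k + 1) : ℝ) * (a (n - k) : ℝ) := by
                apply Finset.sum_le_sum_of_subset_of_nonneg
                · exact Finset.range_mono (by omega)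
                · intro k _ _; positivity
  rw [tendsto_order]
  constructor
  · intro b hb
    obtain ⟨g, hg1, hg2⟩ := exists_between (max_lt hb hγ)
    have hgb : b < g := lt_of_le_of_lt (le_max_left _ _) hg1
    have hg1' : 1 < g := lt_of_le_of_lt (le_max_right _ _) hg1
    obtain ⟨c, hc, hcn⟩ := hlower g hg1' hg2
    have hlim : Tendsto (fun n : ℕ => c ^ (1 / (n : ℝ)) * g) atTop (nhds (c ^ (0 : ℝ) * g)) := by
      apply Tendsto.mul_const
      exact (Real.continuousAt_const_rpow hc.ne').tendsto.comp tendsto_one_div_atTop_nhds_zero_nat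
    rw [Real.rpow_zero, one_mul] at hlim
    filter_upwards [(tendsto_order.1 hlim).1 b hgb, eventually_ge_atTop 1] with n hn hn1
    refine lt_of_lt_of_le hn ?_
    have hg0 : 0 ≤ g := by linarith
    have hn0 : n ≠ 0 := by omega
    have e : c ^ (1 / (n : ℝ)) * g = (c * g ^ n) ^ (1 / (n : ℝ)) := by
      rw [Real.mul_rpow hc.le (by positivity), one_div, Real.pow_rpow_inv_natCast hg0 hn0]
    rw [e]
    exact Real.rpow_le_rpow (by positivity) (hcn n) (by positivity)
  · intro b hb
    filter_upwards [eventually_ge_atTop 1] with n hn1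
    refine lt_of_le_of_lt ?_ hb
    have hn0 : n ≠ 0 := by omega
    calc (a n : ℝ) ^ (1 / (n : ℝ)) ≤ (γ ^ n) ^ (1 / (n : ℝ)) :=
          Real.rpow_le_rpow (Nat.cast_nonneg _) (hupper n) (by positivity)
      _ = γ := by rw [one_div, Real.pow_rpow_inv_natCast hγ0.le hn0]

/-! ### Expansions in a non-integer base -/

/-- If every `x ∈ [lo, hi]` is `D i + q y` with `y ∈ [lo, hi]`, then it has an expansion. -/
theorem expansion (D : ℕ → ℝ) (q lo hi : ℝ) (hq0 : 0 < q) (hq1 : q < 1)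
    (hD : ∀ i, 0 ≤ D i)
    (hstep : ∀ x ∈ Set.Icc lo hi, ∃ i : ℕ, ∃ y ∈ Set.Icc lo hi, x = D i + q * y)
    (x : ℝ) (hx : x ∈ Set.Icc lo hi) :
    ∃ κ : ℕ → ℕ, HasSum (fun i => q ^ i * D (κ i)) x := by
  choose! d y hy hxy using hstep
  let z : ℕ → ℝ := fun n => y^[n] x
  have hz0 : z 0 = x := rfl
  have hzs : ∀ n, z (n + 1) = y (z n) := fun n => Function.iterate_succ_apply' y n x
  have hz : ∀ n, z n ∈ Set.Icc lo hi := by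
    intro n
    induction n with
    | zero => exact hx
    | succ n ih => rw [hzs]; exact hy _ ih
  refine ⟨fun n => d (z n), ?_⟩
  rw [hasSum_iff_tendsto_nat_of_nonneg (fun i => mul_nonneg (pow_nonneg hq0.le _) (hD _))]
  have hpart : ∀ n, ∑ i ∈ Finset.range n, q ^ i * D (d (z i)) = x - q ^ n * z n := by
    intro n
    induction n with
    | zero => simp [hz0]
    | succ n ih =>
      rw [Finset.sum_range_succ, ih]
      have := hxy (z n) (hz n)
      rw [← hzs] at this
      have h2 : D (d (z n)) = z n - q * z (n + 1) := by linarith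
      rw [h2]; ring
  simp only [hpart]
  have hlim : Tendsto (fun n => q ^ n * z n) atTop (nhds 0) := by
    have h1 : Tendsto (fun n : ℕ => q ^ n * (|lo| + |hi|)) atTop (nhds (0 * (|lo| + |hi|))) :=
      (tendsto_pow_atTop_nhds_zero_of_lt_one hq0.le hq1).mul_const _
    rw [zero_mul] at h1
    apply squeeze_zero_norm _ h1
    intro n
    rw [norm_mul, Real.norm_eq_abs, Real.norm_eq_abs, abs_of_pos (pow_pos hq0 n)]
    apply mul_le_mul_of_nonneg_left _ (pow_nonneg hq0.le _)
    have := hz n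
    rw [abs_le]
    constructor
    · linarith [this.1, neg_abs_le lo, abs_nonneg hi]
    · linarith [this.2, le_abs_self hi, abs_nonneg lo]
  simpa using hlim.const_sub x

/-! ### The particular family of classes -/

/-- Nested choices of doubly inflated oscillations. -/
def allow (i r s : ℕ) : Prop :=
  (r = 2 ∧ s = 2) ∨ (r = 2 ∧ s = 3) ∨ (r = 2 ∧ s = 4 ∧ (i = 1 ∨ 3 ≤ i)) ∨
  (r = 3 ∧ s = 2 ∧ 2 ≤ i) ∨ (r = 3 ∧ s = 3 ∧ 4 ≤ i) ∨ (r = 4 ∧ s = 2 ∧ 5 ≤ i) ∨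
  (r = 3 ∧ s = 4 ∧ 6 ≤ i) ∨ (r = 4 ∧ s = 3 ∧ 7 ≤ i) ∨ (r = 4 ∧ s = 4 ∧ 8 ≤ i)

def fam (κ : ℕ → ℕ) (M r j s : ℕ) : Prop :=
  (j = 0 ∧ r + s ≤ 5) ∨ (1 ≤ j ∧ r ≤ 4 ∧ s ≤ 4 ∧ (r ≤ 1 ∨ s ≤ 1)) ∨
    (1 ≤ j ∧ M ≤ j ∧ allow (κ (j - M)) r s)

theorem allow_bounds {i r s : ℕ} (h : allow i r s) : r ≤ 4 ∧ s ≤ 4 := by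
  unfold allow at h
  rcases h with h | h | h | h | h | h | h | h | h <;> omega

theorem allow_left {i r s : ℕ} (h : allow i (r + 1) s) : r ≤ 1 ∨ allow i r s := by
  unfold allow at h ⊢
  rcases h with h | h | h | h | h | h | h | h | h <;> omega

theorem allow_right {i r s : ℕ} (h : allow i r (s + 1)) : s ≤ 1 ∨ allow i r s := by
  unfold allow at h ⊢
  rcases h with h | h | h | h | h | h | h | h | h <;> omega

theorem fam_bounds {κ : ℕ → ℕ} {M r j s : ℕ} (h : fam κ M r (j + 1) s) : r ≤ 4 ∧ s ≤ 4 := by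
  rcases h with h | h | ⟨_, _, h⟩
  · omega
  · omega
  · exact allow_bounds h

theorem fam_of {κ : ℕ → ℕ} {M r j s : ℕ} (h1 : r ≤ 4) (h2 : s ≤ 4) (h3 : r ≤ 1 ∨ s ≤ 1) :
    fam κ M r j s := by
  rcases Nat.eq_zero_or_pos j with rfl | hj
  · exact Or.inl (by omega)
  · exact Or.inr (Or.inl ⟨hj, h1, h2, h3⟩)

theorem fam_closed (κ : ℕ → ℕ) (M : ℕ) : Closed (fam κ M) where
  c0 := fam_of (by omega) (by omega) (by omega)
  c1 := by
    intro r j s h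
    have := fam_bounds h
    exact fam_of (by omega) (by omega) (by omega)
  c2 := by
    intro r j s h
    rcases h with h | h | ⟨h1, h2, h⟩
    · exact Or.inl (by omega)
    · exact fam_of (by omega) (by omega) (by omega)
    · have hb := allow_bounds h
      rcases allow_left h with h3 | h3
      · exact fam_of (by omega) (by omega) (by omega)
      · exact Or.inr (Or.inr ⟨h1, h2, h3⟩)
  c3 := by
    intro r a b s h
    have := fam_bounds h
    exact ⟨fam_of (by omega) (by omega) (by omega), fam_of (by omega) (by omega) (by omega)⟩
  c4 := by
    intro r a b s h
    have := fam_bounds (j := a + b + 1) h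
    exact ⟨fam_of (by omega) (by omega) (by omega), fam_of (by omega) (by omega) (by omega)⟩
  c5 := by
    intro r j s h
    have := fam_bounds h
    exact fam_of (by omega) (by omega) (by omega)
  c6 := by
    intro r j s h
    rcases h with h | h | ⟨h1, h2, h⟩
    · exact Or.inl (by omega)
    · exact fam_of (by omega) (by omega) (by omega)
    · have hb := allow_bounds h
      rcases allow_right h with h3 | h3
      · exact fam_of (by omega) (by omega) (by omega)
      · exact Or.inr (Or.inr ⟨h1, h2, h3⟩)

theorem fam_star (κ : ℕ → ℕ) (M : ℕ) : ∀ r s, fam κ M r 0 s → fam κ M (r + s) 0 0 := by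
  intro r s; unfold fam; omega

/-- Weight of the `i`-th choice. -/
def dig (t : ℝ) (i : ℕ) : ℝ :=
  1 + t + (if i = 1 ∨ 3 ≤ i then t ^ 2 else 0) + (if 2 ≤ i then t else 0) +
    (if 4 ≤ i then t ^ 2 else 0) + (if 5 ≤ i then t ^ 2 else 0) + (if 6 ≤ i then t ^ 3 else 0) +
    (if 7 ≤ i then t ^ 3 else 0) + (if 8 ≤ i then t ^ 4 else 0)

theorem dig_nonneg (t : ℝ) (ht : 0 ≤ t) (i : ℕ) : 0 ≤ dig t i := by
  unfold dig
  have h2 := pow_nonneg ht 2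
  have h3 := pow_nonneg ht 3
  have h4 := pow_nonneg ht 4
  split_ifs <;> positivity

theorem dig_step (t : ℝ) (h1 : 0.424 < t) (h2 : t < 0.425) (x : ℝ)
    (hx : x ∈ Set.Icc ((1 + t) / (1 - t ^ 2)) ((1 + t + t ^ 2) ^ 2 / (1 - t ^ 2))) :
    ∃ i : ℕ, ∃ y ∈ Set.Icc ((1 + t) / (1 - t ^ 2)) ((1 + t + t ^ 2) ^ 2 / (1 - t ^ 2)),
      x = dig t i + t ^ 2 * y := by
  have ht0 : 0 < t := by linarith
  have hq : 0 < 1 - t ^ 2 := by nlinarith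
  set L := (1 + t) / (1 - t ^ 2) with hL
  set H := (1 + t + t ^ 2) ^ 2 / (1 - t ^ 2) with hH
  have eL : t ^ 2 * L = L - (1 + t) := by rw [hL]; field_simp; ring
  have eH : t ^ 2 * H = H - (1 + 2 * t + 3 * t ^ 2 + 2 * t ^ 3 + t ^ 4) := by
    rw [hH]; field_simp; ring
  have eg : (t ^ 2 * H - t ^ 2 * L) * (1 - t ^ 2) = t ^ 3 * (1 + 3 * t + 2 * t ^ 2 + t ^ 3) := by
    rw [hH, hL]; field_simp; ring
  have hp2 : 0 < t ^ 2 := by positivity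
  have hp3 : 0 < t ^ 3 := by positivity
  have hp4 : 0 < t ^ 4 := by positivity
  have b2 : (0.179776 : ℝ) < t ^ 2 := by nlinarith
  have b2' : t ^ 2 < 0.180625 := by nlinarith
  have b3 : (0.0762 : ℝ) < t ^ 3 := by nlinarith
  have g1 : t - t ^ 2 ≤ t ^ 2 * H - t ^ 2 * L := by
    rw [← mul_le_mul_iff_left₀ hq, eg]
    have : (1 - t) * (1 - t ^ 2) ≤ t ^ 2 * (1 + 3 * t + 2 * t ^ 2 + t ^ 3) := by
      have e1 : (1 - t) * (1 - t ^ 2) ≤ 0.576 * 0.820224 := by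
        apply mul_le_mul <;> nlinarith
      have e2 : (0.179776 : ℝ) * (1 + 3 * 0.424 + 2 * 0.179776 + 0.0762) ≤
          t ^ 2 * (1 + 3 * t + 2 * t ^ 2 + t ^ 3) := by
        apply mul_le_mul <;> linarith
      refine e1.trans (le_trans ?_ e2)
      norm_num
    nlinarith
  have g2 : t ^ 2 ≤ t ^ 2 * H - t ^ 2 * L := by
    have : t ^ 2 ≤ t - t ^ 2 := by nlinarith
    linarith
  have g3 : t ^ 3 ≤ t ^ 2 := by nlinarith
  have g4 : t ^ 4 ≤ t ^ 2 := by nlinarith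
  obtain ⟨hx1, hx2⟩ := hx
  suffices h : ∃ i : ℕ, dig t i + t ^ 2 * L ≤ x ∧ x ≤ dig t i + t ^ 2 * H by
    obtain ⟨i, hi1, hi2⟩ := h
    refine ⟨i, (x - dig t i) / t ^ 2, ⟨?_, ?_⟩, ?_⟩
    · rw [le_div_iff₀ hp2]; linarith
    · rw [div_le_iff₀ hp2]; linarith
    · field_simp; ring
  have d0 : dig t 0 = 1 + t := by norm_num [dig]
  have d1 : dig t 1 = 1 + t + t ^ 2 := by norm_num [dig]
  have d2 : dig t 2 = 1 + t + t := by norm_num [dig]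
  have d3 : dig t 3 = 1 + t + t ^ 2 + t := by norm_num [dig]
  have d4 : dig t 4 = 1 + t + t ^ 2 + t + t ^ 2 := by norm_num [dig]
  have d5 : dig t 5 = 1 + t + t ^ 2 + t + t ^ 2 + t ^ 2 := by norm_num [dig]
  have d6 : dig t 6 = 1 + t + t ^ 2 + t + t ^ 2 + t ^ 2 + t ^ 3 := by norm_num [dig]
  have d7 : dig t 7 = 1 + t + t ^ 2 + t + t ^ 2 + t ^ 2 + t ^ 3 + t ^ 3 := by norm_num [dig]
  have d8 : dig t 8 = 1 + t + t ^ 2 + t + t ^ 2 + t ^ 2 + t ^ 3 + t ^ 3 + t ^ 4 := by norm_num [dig]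
  by_cases c0 : x ≤ dig t 0 + t ^ 2 * H
  · exact ⟨0, by linarith, c0⟩
  by_cases c1 : x ≤ dig t 1 + t ^ 2 * H
  · exact ⟨1, by linarith, c1⟩
  by_cases c2 : x ≤ dig t 2 + t ^ 2 * H
  · exact ⟨2, by linarith, c2⟩
  by_cases c3 : x ≤ dig t 3 + t ^ 2 * H
  · exact ⟨3, by linarith, c3⟩
  by_cases c4 : x ≤ dig t 4 + t ^ 2 * H
  · exact ⟨4, by linarith, c4⟩
  by_cases c5 : x ≤ dig t 5 + t ^ 2 * H
  · exact ⟨5, by linarith, c5⟩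
  by_cases c6 : x ≤ dig t 6 + t ^ 2 * H
  · exact ⟨6, by linarith, c6⟩
  by_cases c7 : x ≤ dig t 7 + t ^ 2 * H
  · exact ⟨7, by linarith, c7⟩
  exact ⟨8, by linarith, by linarith⟩

/-! ### Generating functions -/

/-- Passing from a sum over triples to a sum over lengths. -/
theorem hasSum_tri (A : ℕ → ℕ → ℕ → Prop) (t S : ℝ)
    (h : HasSum (fun p : {p : ℕ × ℕ × ℕ // A p.2.1 p.1 p.2.2 ∧ (p.1 = 0 → p.2.2 = 0)} =>
      t ^ (p.1.2.1 + p.1.2.2 + 1 + 2 * p.1.1)) S) :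
    HasSum (fun k => (Nat.card (Tri A (k + 1)) : ℝ) * t ^ (k + 1)) S := by
  let T := {p : ℕ × ℕ × ℕ // A p.2.1 p.1 p.2.2 ∧ (p.1 = 0 → p.2.2 = 0)}
  let len : T → ℕ := fun p => p.1.2.1 + p.1.2.2 + 2 * p.1.1
  have h1 := (Equiv.sigmaFiberEquiv len).hasSum_iff.2 h
  refine HasSum.sigma h1 ?_
  intro k
  let e : {p : T // len p = k} ≃ Tri A (k + 1) :=
    { toFun := fun p => ⟨p.1.1, p.1.2, by have := p.2; simp only [len] at this; omega⟩
      invFun := fun p => ⟨⟨p.1, p.2.1⟩, by have := p.2.2; simp only [len]; omega⟩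
      left_inv := fun p => rfl
      right_inv := fun p => rfl }
  have : Finite {p : T // len p = k} := Finite.of_equiv _ e.symm
  have := Fintype.ofFinite {p : T // len p = k}
  have e2 : (Nat.card (Tri A (k + 1)) : ℝ) * t ^ (k + 1) =
      ∑ p : {p : T // len p = k}, t ^ (k + 1) := by
    rw [Finset.sum_const, nsmul_eq_mul, ← Nat.card_congr e, Nat.card_eq_fintype_card]
    rfl
  rw [e2]
  convert hasSum_fintype (fun p : {p : T // len p = k} => t ^ (k + 1)) using 1
  funext p
  have := p.2
  simp only [len] at this
  simp only [Function.comp, Equiv.sigmaFiberEquiv_apply]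
  congr 1
  omega

open Classical in
theorem hasSum_triples (A : ℕ → ℕ → ℕ → Prop) (hA : ∀ r j s, A r j s → r < 6 ∧ s < 6)
    (t S : ℝ) (ht : 0 ≤ t)
    (h : HasSum (fun j => ∑ p ∈ Finset.range 6 ×ˢ Finset.range 6,
      if A p.1 j p.2 ∧ (j = 0 → p.2 = 0) then t ^ (p.1 + p.2 + 1 + 2 * j) else 0) S) :
    HasSum (fun p : {p : ℕ × ℕ × ℕ // A p.2.1 p.1 p.2.2 ∧ (p.1 = 0 → p.2.2 = 0)} =>
      t ^ (p.1.2.1 + p.1.2.2 + 1 + 2 * p.1.1)) S := by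
  let f : ℕ × ℕ × ℕ → ℝ := fun p => if A p.2.1 p.1 p.2.2 ∧ (p.1 = 0 → p.2.2 = 0) then
    t ^ (p.2.1 + p.2.2 + 1 + 2 * p.1) else 0
  have hf0 : 0 ≤ f := by
    intro p; simp only [f]; split_ifs
    · exact pow_nonneg ht _
    · exact le_rfl
  have hfib : ∀ j, HasSum (fun p : ℕ × ℕ => f (j, p)) (∑ p ∈ Finset.range 6 ×ˢ Finset.range 6,
      if A p.1 j p.2 ∧ (j = 0 → p.2 = 0) then t ^ (p.1 + p.2 + 1 + 2 * j) else 0) := by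
    intro j
    apply hasSum_sum_of_ne_finset_zero
    rintro ⟨r, s⟩ hrs
    simp only [f]
    rw [if_neg]
    rintro ⟨h1, _⟩
    apply hrs
    simpa using hA _ _ _ h1
  have hsm : Summable f := by
    rw [summable_prod_of_nonneg hf0]
    refine ⟨fun j => (hfib j).summable, ?_⟩
    simp only [(hfib _).tsum_eq]
    exact h.summable
  have hfS : HasSum f S := by
    have h1 := hsm.hasSum.prod_fiberwise hfib
    rw [h.unique h1]
    exact hsm.hasSum
  have key := (hasSum_subtype_iff_indicator (f := fun p : ℕ × ℕ × ℕ => t ^ (p.2.1 + p.2.2 + 1 + 2 * p.1))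
    (s := {p : ℕ × ℕ × ℕ | A p.2.1 p.1 p.2.2 ∧ (p.1 = 0 → p.2.2 = 0)}) (a := S)).2 ?_
  · exact key
  · convert hfS using 1
    funext p
    simp only [Set.indicator_apply, Set.mem_ofPred_eq, f]

open Classical in
theorem fam_sum (κ : ℕ → ℕ) (M j : ℕ) (t : ℝ) :
    (∑ p ∈ Finset.range 6 ×ˢ Finset.range 6,
      if fam κ M p.1 j p.2 ∧ (j = 0 → p.2 = 0) then t ^ (p.1 + p.2 + 1 + 2 * j) else 0) =
    if j = 0 then t + t ^ 2 + t ^ 3 + t ^ 4 + t ^ 5 + t ^ 6 else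
      t ^ (2 * j + 1) * ((1 + t) * (1 + t + 2 * t ^ 2 + 2 * t ^ 3 + 2 * t ^ 4)) +
      (if M ≤ j then t ^ (2 * j + 5) * dig t (κ (j - M)) else 0) := by
  rw [Finset.sum_product]
  rcases Nat.eq_zero_or_pos j with rfl | hj
  · simp [Finset.sum_range_succ, fam]
  · have hj0 : j ≠ 0 := by omega
    have hj1 : 1 ≤ j := hj
    by_cases hM : M ≤ j
    · simp only [Finset.sum_range_succ, Finset.sum_range_zero, fam, allow, dig, hj0, hj1, hM]
      generalize κ (j - M) = i
      norm_num
      split_ifs <;> ring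
    · simp only [Finset.sum_range_succ, Finset.sum_range_zero, fam, hj0, hj1, hM]
      norm_num
      ring

theorem core (γ : ℝ) (h1 : 2.353 < γ) (h2 : γ < 2.358) (N : ℕ)
    (hx1 : 2 ≤ (γ ^ 7 - 2 * γ ^ 6 - γ ^ 4 - γ ^ 3 - 2 * γ ^ 2 - 2 * γ - 1) * γ ^ (2 * N + 1) / (γ - 1))
    (hx2 : (γ ^ 7 - 2 * γ ^ 6 - γ ^ 4 - γ ^ 3 - 2 * γ ^ 2 - 2 * γ - 1) * γ ^ (2 * N + 1) / (γ - 1) ≤ 3) :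
    ∃ C : ∀ n : ℕ, Set (Equiv.Perm (Fin n)), IsPermClass C ∧
      Tendsto (fun n : ℕ => (Nat.card ↥(C n) : ℝ) ^ (1 / (n : ℝ))) atTop (nhds γ) := by
  set x := (γ ^ 7 - 2 * γ ^ 6 - γ ^ 4 - γ ^ 3 - 2 * γ ^ 2 - 2 * γ - 1) * γ ^ (2 * N + 1) / (γ - 1) with hx
  have hγ0 : 0 < γ := by linarith
  obtain ⟨t, ht⟩ : ∃ t, t = γ⁻¹ := ⟨_, rfl⟩
  have hγt : γ = t⁻¹ := by rw [ht, inv_inv]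
  have ht0 : 0 < t := by rw [ht]; positivity
  have hmul : γ * t = 1 := by rw [ht]; field_simp
  have ht1 : 0.424 < t := by nlinarith
  have ht2 : t < 0.425 := by nlinarith
  have hq : 0 < 1 - t ^ 2 := by nlinarith
  have b2 : (0.179776 : ℝ) < t ^ 2 := by nlinarith
  have hmem : x ∈ Set.Icc ((1 + t) / (1 - t ^ 2)) ((1 + t + t ^ 2) ^ 2 / (1 - t ^ 2)) := by
    constructor
    · refine le_trans ?_ hx1
      rw [div_le_iff₀ hq]; nlinarith
    · refine le_trans hx2 ?_
      rw [le_div_iff₀ hq]; nlinarith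
  obtain ⟨κ, hκ⟩ := expansion (dig t) (t ^ 2) _ _ (by positivity) (by linarith)
    (dig_nonneg t ht0.le) (dig_step t ht1 ht2) x hmem
  let M := N + 1
  refine ⟨cls (fam κ M), cls_isPermClass (fam_closed κ M), ?_⟩
  have hF : HasSum (fun j : ℕ => if j = 0 then t + t ^ 2 + t ^ 3 + t ^ 4 + t ^ 5 + t ^ 6 else
      t ^ (2 * j + 1) * ((1 + t) * (1 + t + 2 * t ^ 2 + 2 * t ^ 3 + 2 * t ^ 4)) +
      (if M ≤ j then t ^ (2 * j + 5) * dig t (κ (j - M)) else 0)) 1 := by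
    set E := (1 + t) * (1 + t + 2 * t ^ 2 + 2 * t ^ 3 + 2 * t ^ 4) with hE
    have p1 : HasSum (fun j : ℕ => if j = 0 then
        t + t ^ 2 + t ^ 3 + t ^ 4 + t ^ 5 + t ^ 6 - t * E else 0)
        (t + t ^ 2 + t ^ 3 + t ^ 4 + t ^ 5 + t ^ 6 - t * E) := hasSum_ite_eq 0 _
    have p2 : HasSum (fun j : ℕ => (t * E) * (t ^ 2) ^ j) ((t * E) * (1 - t ^ 2)⁻¹) :=
      (hasSum_geometric_of_lt_one (by positivity) (by linarith)).mul_left _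
    have p3 : HasSum (fun j : ℕ => if M ≤ j then t ^ (2 * j + 5) * dig t (κ (j - M)) else 0)
        (t ^ (2 * M + 5) * x) := by
      have inj : Function.Injective (fun i : ℕ => i + M) := add_left_injective M
      rw [← inj.hasSum_iff]
      · have e := hκ.mul_left (t ^ (2 * M + 5))
        refine Eq.mp (congrArg (fun g => HasSum g (t ^ (2 * M + 5) * x)) ?_) e
        funext i
        simp only [Function.comp, Nat.le_add_left, if_true, Nat.add_sub_cancel]
        ring
      · intro j hj
        rw [if_neg]
        intro h
        exact hj ⟨j - M, by simp only; omega⟩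
    have p := (p1.add p2).add p3
    refine Eq.mp (congrArg₂ (fun g y => HasSum g y) ?_ ?_) p
    · funext j
      by_cases hj : j = 0
      · subst hj
        simp [M]
      · simp only [hj, if_false]
        ring
    · have hxt : t ^ (2 * M + 5) * x = (1 - 2 * t - t ^ 3 - t ^ 4 - 2 * t ^ 5 - 2 * t ^ 6 - t ^ 7) / (1 - t) := by
        have ht1' : 1 - t ≠ 0 := by linarith
        have e1 : γ - 1 = (1 - t) * γ := by linarith
        have e2 : t ^ (2 * M + 5) = t ^ 7 * t ^ (2 * N) := by
          simp only [M]; ring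
        have e3 : t ^ (2 * N) * γ ^ (2 * N) = 1 := by rw [← mul_pow, mul_comm, hmul, one_pow]
        rw [hx, e1, e2, pow_succ γ (2 * N)]
        have e4 : t ^ 7 * t ^ (2 * N) * ((γ ^ 7 - 2 * γ ^ 6 - γ ^ 4 - γ ^ 3 - 2 * γ ^ 2 - 2 * γ - 1) *
            (γ ^ (2 * N) * γ) / ((1 - t) * γ)) = (t ^ (2 * N) * γ ^ (2 * N)) * (t ^ 7 *
            (γ ^ 7 - 2 * γ ^ 6 - γ ^ 4 - γ ^ 3 - 2 * γ ^ 2 - 2 * γ - 1)) / (1 - t) := by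
          field_simp
        rw [e4, e3, one_mul]
        congr 1
        rw [hγt]
        field_simp
      rw [hxt, hE]
      have h1t : 1 - t ≠ 0 := by linarith
      have h1t' : 1 - t ^ 2 ≠ 0 := hq.ne'
      field_simp
      ring
  classical
  have hT := hasSum_triples (fam κ M) (by
    intro r j s h
    rcases h with h | h | ⟨_, _, h⟩
    · omega
    · omega
    · have := allow_bounds h; omega) t 1 ht0.le (by
      simp only [fam_sum]; exact hF)
  have hk := hasSum_tri _ _ _ hT
  simp only [card_cls]
  refine growth (fun n => Nat.card (W (fam κ M) n)) (fun k => Nat.card (Tri (fam κ M) k))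
    (card_W_zero _) (card_W_succ _ (fam_star κ M)) ?_ γ (by linarith) ?_
  · rw [Nat.one_le_iff_ne_zero, Nat.card_ne_zero]
    exact ⟨⟨⟨(0, 0, 0), ⟨(fam_closed κ M).c0, by simp⟩, rfl⟩⟩, inferInstance⟩
  · rw [← ht]; exact hk

theorem intervals_of_growth_rates_near_theta (θ : ℝ)
    (hθ : ∀ x : ℝ,
      x ^ 7 - 2 * x ^ 6 - x ^ 4 - x ^ 3 - 2 * x ^ 2 - 2 * x - 1 = 0 ↔ x = θ) :
    ∀ ε : ℝ, 0 < ε → ∃ δ₁ δ₂ : ℝ, 0 < δ₁ ∧ δ₁ < δ₂ ∧ δ₂ < ε ∧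
      ∀ γ : ℝ, γ ∈ Set.Icc (θ + δ₁) (θ + δ₂) →
        ∃ C : ∀ n : ℕ, Set (Equiv.Perm (Fin n)), IsPermClass C ∧
          Tendsto (fun n : ℕ => (Nat.card ↥(C n) : ℝ) ^ (1 / (n : ℝ))) atTop (nhds γ) := by
  intro ε hε
  set p : ℝ → ℝ := fun x => x ^ 7 - 2 * x ^ 6 - x ^ 4 - x ^ 3 - 2 * x ^ 2 - 2 * x - 1 with hp
  have hpc : Continuous p := by simp only [hp]; fun_prop
  have hroot : ∀ x, p x = 0 ↔ x = θ := hθ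
  have hpθ : p θ = 0 := (hroot θ).2 rfl
  obtain ⟨hθ1, hθ2⟩ : 2.355 < θ ∧ θ < 2.356 := by
    have hI := intermediate_value_Icc (show (2.355 : ℝ) ≤ 2.356 by norm_num) hpc.continuousOn
    have ha : p 2.355 < 0 := by simp only [hp]; norm_num
    have hb : 0 < p 2.356 := by simp only [hp]; norm_num
    obtain ⟨z, hz, hz0⟩ := hI ⟨ha.le, hb.le⟩
    have hzθ := (hroot z).1 hz0
    subst hzθ
    refine ⟨lt_of_le_of_ne hz.1 ?_, lt_of_le_of_ne hz.2 ?_⟩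
    · intro h; rw [← h] at hz0; linarith
    · intro h; rw [h] at hz0; linarith
  have hpos : ∀ x, θ < x → x ≤ 3 → 0 < p x := by
    intro x hx hx3
    by_contra hneg
    push Not at hneg
    have hb : 0 < p 3 := by simp only [hp]; norm_num
    obtain ⟨z, hz, hz0⟩ := intermediate_value_Icc hx3 hpc.continuousOn ⟨hneg, hb.le⟩
    have := (hroot z).1 hz0
    linarith [hz.1]
  obtain ⟨η, hη0, hη1, hη2⟩ : ∃ η : ℝ, 0 < η ∧ η < ε ∧ η < 0.002 := by
    obtain ⟨η, h1, h2⟩ := exists_between (lt_min hε (show (0 : ℝ) < 0.002 by norm_num))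
    exact ⟨η, h1, lt_of_lt_of_le h2 (min_le_left _ _), lt_of_lt_of_le h2 (min_le_right _ _)⟩
  have hpη : 0 < p (θ + η) := hpos _ (by linarith) (by linarith)
  obtain ⟨N, hN⟩ : ∃ N : ℕ, 3 * (θ + η - 1) / p (θ + η) < (θ + η) ^ N :=
    pow_unbounded_of_one_lt _ (by linarith)
  let G : ℝ → ℝ := fun x => p x * x ^ (2 * N + 1) / (x - 1)
  have hGc : ContinuousOn G (Set.Icc θ (θ + η)) := by
    apply ContinuousOn.div
    · exact (hpc.mul (continuous_pow _)).continuousOn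
    · fun_prop
    · intro x hx; have := hx.1; linarith
  have hG0 : G θ = 0 := by simp only [G, hpθ]; simp
  have hG1 : 3 < G (θ + η) := by
    simp only [G]
    rw [lt_div_iff₀ (by linarith)]
    rw [div_lt_iff₀ hpη] at hN
    have : (θ + η) ^ N ≤ (θ + η) ^ (2 * N + 1) := pow_le_pow_right₀ (by linarith) (by omega)
    nlinarith
  obtain ⟨z, hz, hzG⟩ := intermediate_value_Icc (by linarith : θ ≤ θ + η) hGc
    (show (5 / 2 : ℝ) ∈ Set.Icc (G θ) (G (θ + η)) from ⟨by rw [hG0]; norm_num, by linarith⟩)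
  have hzl : θ < z := lt_of_le_of_ne hz.1 (by rintro rfl; rw [hG0] at hzG; norm_num at hzG)
  have hzr : z < θ + η := lt_of_le_of_ne hz.2 (by rintro rfl; linarith)
  have hGz : ContinuousAt G z := hGc.continuousAt (Icc_mem_nhds hzl hzr)
  have hev : ∀ᶠ y in nhds z, G y ∈ Set.Ioo 2 3 :=
    hGz.eventually (by rw [hzG]; exact Ioo_mem_nhds (by norm_num) (by norm_num))
  obtain ⟨d, hd0, hd⟩ := Metric.eventually_nhds_iff.1 hev
  obtain ⟨e, he0, he⟩ := exists_between (lt_min hd0 (sub_pos.2 hzr))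
  have he1 : e < d := lt_of_lt_of_le he (min_le_left _ _)
  have he2 : e < θ + η - z := lt_of_lt_of_le he (min_le_right _ _)
  refine ⟨z - θ, z - θ + e, by linarith, by linarith, by linarith, ?_⟩
  rintro γ ⟨hγ1, hγ2⟩
  have hGγ := hd (y := γ) (by rw [Real.dist_eq, abs_lt]; constructor <;> linarith)
  exact core γ (by linarith) (by linarith) N hGγ.1.le hGγ.2.le
end
end
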